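/- Let T_n denote the number of rooted labeled trees on n vertices and let N_n denote the number of ordered pairs (T₁, T₂) of rooted labeled trees on n vertices that are isomorphic. Set p_n = N_n / T_n², the probability that two independently, uniformly chosen rooted labeled trees on n vertices are isomorphic. Then there exist constants A > 0 and c ∈ (0,1) such that p_n / (n^{3/2} · c^n) → A as n → ∞. -/

import Mathlib

open scoped Classical BigOperators

/-- A rooted labeled tree on `n` vertices: a simple graph on `Fin n` that is a
tree, together with a distinguished root vertex. -/
structure RTree (n : ℕ) where
  graph : SimpleGraph (Fin n)
  isTree : graph.IsTree
  root : Fin n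

namespace RTree

/-- Two rooted labeled trees are isomorphic if there is a graph isomorphism
mapping root to root. -/
def Isom {n : ℕ} (T₁ T₂ : RTree n) : Prop :=
  ∃ φ : T₁.graph ≃g T₂.graph, φ T₁.root = T₂.root

/-- The out-degree (number of children) of a vertex: its degree if it is the
root and its degree minus one otherwise. -/
noncomputable def outdeg {n : ℕ} (T : RTree n) (v : Fin n) : ℕ :=
  if v = T.root then (T.graph.neighborSet v).ncard
  else (T.graph.neighborSet v).ncard - 1

/-- The number of root-fixing graph automorphisms. -/
noncomputable def autCard {n : ℕ} (T : RTree n) : ℕ :=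
  Nat.card {φ : T.graph ≃g T.graph // φ T.root = T.root}

instance finite {n : ℕ} : Finite (RTree n) := by
  have h : Function.Injective (fun T : RTree n => (T.graph, T.root)) := by
    rintro ⟨g₁, h₁, r₁⟩ ⟨g₂, h₂, r₂⟩ h
    simp_all
  exact Finite.of_injective _ h

noncomputable instance fintype {n : ℕ} : Fintype (RTree n) := Fintype.ofFinite _

end RTree

/-- The probability that two independently, uniformly chosen rooted labeled
trees on `n` vertices are isomorphic. -/
noncomputable def probIsom (n : ℕ) : ℝ :=
  (Nat.card {p : RTree n × RTree n // p.1.Isom p.2} : ℝ) /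
    (Nat.card (RTree n) : ℝ) ^ 2

/-!
A rooted tree is recorded by its parent map, and isomorphism classes are weighted by `|Aut τ|⁻ᵏ`.
A class `τ` on `n` vertices has `n! / |Aut τ|` labelings, so with `wₖ(n)` the total weight of the
classes of size `n` one has `pₙ = w₂(n) / w₁(n)²`. Marking a vertex and detaching the branch that
contains it shows that `F(z) = ∑ wₖ(n) zⁿ` solves `z F' (1 - F) = F K`, where the correction `K`
comes from repeated branches and is analytic beyond the radius of convergence of `F`.
At that radius `F = 1`, so `F` has a square-root singularity there, and the coefficients satisfy
`wₖ(n) ρₖⁿ ∼ Aₖ n^(-3/2)`. Taking the quotient for `k = 2` and `k = 1` gives the asymptotics with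
`c = ρ₁² / ρ₂`; since `pₙ ≤ 1`, the factor `n^(3/2)` forces `c < 1`.
-/

section CoefficientEstimates

open Filter Topology Real intervalIntegral

lemma norm_one_sub_circleMap_sq (r θ : ℝ) :
    ‖1 - circleMap 0 r θ‖ ^ 2 = (1 - r) ^ 2 + 4 * r * sin (θ / 2) ^ 2 := by
  have hre : (1 - circleMap 0 r θ).re = 1 - r * cos θ := by simp [circleMap, Complex.exp_re]
  have him : (1 - circleMap 0 r θ).im = -(r * sin θ) := by simp [circleMap, Complex.exp_im]
  have half_angle : sin (θ / 2) ^ 2 = 1 / 2 - cos θ / 2 := by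
    rw [sin_sq_eq_half_sub]; ring_nf
  rw [Complex.sq_norm, Complex.normSq_apply, hre, him, half_angle]
  linear_combination r ^ 2 * sin_sq_add_cos_sq θ

lemma min_div_pi_le_sin_half {θ : ℝ} (h₀ : 0 ≤ θ) (h₁ : θ ≤ 2 * π) :
    min (θ / π) ((2 * π - θ) / π) ≤ sin (θ / 2) := by
  rcases le_total θ π with h | h
  · calc min (θ / π) ((2 * π - θ) / π) ≤ θ / π := min_le_left _ _
      _ = 2 / π * (θ / 2) := by ring
      _ ≤ sin (θ / 2) := mul_le_sin (by linarith [pi_pos]) (by linarith [pi_pos])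
  · calc min (θ / π) ((2 * π - θ) / π) ≤ (2 * π - θ) / π := min_le_right _ _
      _ = 2 / π * (π - θ / 2) := by ring
      _ ≤ sin (π - θ / 2) := mul_le_sin (by linarith [pi_pos]) (by linarith [pi_pos])
      _ = sin (θ / 2) := sin_pi_sub _

lemma min_div_pi_le_norm_one_sub_circleMap {r θ : ℝ} (hr : 1 / 4 ≤ r) (h₀ : 0 ≤ θ)
    (h₁ : θ ≤ 2 * π) : min (θ / π) ((2 * π - θ) / π) ≤ ‖1 - circleMap 0 r θ‖ := by
  refine (min_div_pi_le_sin_half h₀ h₁).trans (le_of_sq_le_sq ?_ (norm_nonneg _))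
  rw [norm_one_sub_circleMap_sq]
  nlinarith [sq_nonneg (1 - r), sq_nonneg (sin (θ / 2))]

/-- A majorant, independent of the radius `r`, of `‖1 - r * exp (i θ)‖ ^ (-a)` for
`θ ∈ (0, 2π)`; it is integrable for `a < 1`. -/
noncomputable def angularMajorant (a θ : ℝ) : ℝ :=
  (θ / π) ^ (-a) + ((2 * π - θ) / π) ^ (-a)

lemma intervalIntegrable_angularMajorant {a : ℝ} (ha : a < 1) :
    IntervalIntegrable (angularMajorant a) MeasureTheory.volume 0 (2 * π) := by
  have hleft : IntervalIntegrable (fun θ : ℝ => (θ / π) ^ (-a)) MeasureTheory.volume 0 (2 * π) := by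
    have := (intervalIntegrable_rpow' (a := 0) (b := 2) (r := -a) (by linarith)).comp_mul_right
      (c := π⁻¹)
    simpa [div_eq_mul_inv] using this
  have hright := (hleft.comp_sub_left (2 * π)).symm
  rw [sub_zero, sub_self] at hright
  exact hleft.add hright

lemma norm_one_sub_circleMap_rpow_neg_le {a r θ : ℝ} (ha : 0 ≤ a) (hr : 1 / 4 ≤ r) (h₀ : 0 < θ)
    (h₁ : θ < 2 * π) : ‖1 - circleMap 0 r θ‖ ^ (-a) ≤ angularMajorant a θ := by
  have hpos : 0 < θ / π := by positivity
  have hpos' : 0 < (2 * π - θ) / π := div_pos (by linarith) pi_pos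
  rcases min_le_iff.1 (min_div_pi_le_norm_one_sub_circleMap hr h₀.le h₁.le) with h | h
  · exact (rpow_le_rpow_of_nonpos hpos h (by linarith)).trans
      (le_add_of_nonneg_right (by positivity))
  · exact (rpow_le_rpow_of_nonpos hpos' h (by linarith)).trans
      (le_add_of_nonneg_left (by positivity))

lemma norm_iteratedDeriv_div_factorial_le {h : ℂ → ℂ} {c : ℂ} {r : ℝ} (hr : 0 < r)
    (hd : DifferentiableOn ℂ h (Metric.closedBall c r)) (n : ℕ) :
    ‖iteratedDeriv n h c / n.factorial‖ ≤
      (2 * π)⁻¹ * (∫ θ in 0..2 * π, ‖h (circleMap c r θ)‖) * r⁻¹ ^ n := by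
  have hcauchy := (hd.hasFPowerSeriesOnBall (R := ⟨r, hr.le⟩) (by exact_mod_cast hr))
  have htaylor := (hd.analyticAt (Metric.closedBall_mem_nhds c hr)).hasFPowerSeriesAt
  have hcoeff : cauchyPowerSeries h c r n = _ :=
    congrFun (hcauchy.hasFPowerSeriesAt.eq_formalMultilinearSeries htaylor) n
  calc ‖iteratedDeriv n h c / n.factorial‖ = ‖cauchyPowerSeries h c r n‖ := by
        rw [hcoeff, FormalMultilinearSeries.ofScalars_norm]
    _ ≤ _ := by simpa only [abs_of_pos hr] using norm_cauchyPowerSeries_le h c r n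

lemma one_sub_inv_inv_pow_le_exp {n : ℕ} (hn : 2 ≤ n) : (1 - (n : ℝ)⁻¹)⁻¹ ^ n ≤ exp 2 := by
  have hn₂ : (2 : ℝ) ≤ n := by exact_mod_cast hn
  have hpos : 0 < 1 - (n : ℝ)⁻¹ := sub_pos.2 (inv_lt_one_of_one_lt₀ (by linarith))
  have hbase : (1 - (n : ℝ)⁻¹)⁻¹ ≤ exp (2 / n) := by
    refine le_trans ?_ (add_one_le_exp _)
    rw [inv_le_iff_one_le_mul₀ hpos]
    field_simp
    nlinarith
  calc (1 - (n : ℝ)⁻¹)⁻¹ ^ n ≤ exp (2 / n) ^ n := by gcongr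
    _ = exp 2 := by rw [← Real.exp_nat_mul]; congr 1; field_simp

lemma integral_norm_circleMap_le {h : ℂ → ℂ} (hd : DifferentiableOn ℂ h (Metric.ball 0 1))
    {C r a : ℝ} (ha₀ : 0 ≤ a) (ha₁ : a < 1) (hr : 1 / 2 ≤ r) (hr₁ : r < 1)
    (hC : ∀ s : ℂ, 1 / 2 ≤ ‖s‖ → ‖s‖ < 1 → ‖h s‖ ≤ C / ‖1 - s‖) :
    ∫ θ in 0..2 * π, ‖h (circleMap 0 r θ)‖ ≤
      C * (1 - r) ^ (a - 1) * ∫ θ in 0..2 * π, angularMajorant a θ := by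
  have hnorm (θ : ℝ) : ‖circleMap 0 r θ‖ = r := by simp [abs_of_pos (show 0 < r by linarith)]
  have hC₀ : 0 ≤ C := by
    have := (norm_nonneg _).trans (hC (1 / 2) (by norm_num) (by norm_num))
    norm_num at this
    linarith
  rw [← integral_const_mul]
  refine integral_mono_on_of_le_Ioo (by positivity) (Continuous.intervalIntegrable ?_ _ _)
    ((intervalIntegrable_angularMajorant ha₁).const_mul _) fun θ hθ => ?_
  · exact (hd.continuousOn.comp_continuous (continuous_circleMap 0 r)
      fun θ => by rw [mem_ball_zero_iff, hnorm]; exact hr₁).norm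
  have hdist : 1 - r ≤ ‖1 - circleMap 0 r θ‖ := by
    simpa only [norm_one, hnorm] using norm_sub_norm_le 1 (circleMap 0 r θ)
  have hr₀ : 0 < 1 - r := sub_pos.2 hr₁
  calc ‖h (circleMap 0 r θ)‖ ≤ C / ‖1 - circleMap 0 r θ‖ :=
        hC _ (by rw [hnorm]; exact hr) (by rw [hnorm]; exact hr₁)
    _ = C * ‖1 - circleMap 0 r θ‖ ^ (a - 1) * ‖1 - circleMap 0 r θ‖ ^ (-a) := by
        rw [mul_assoc, ← rpow_add (hr₀.trans_le hdist), div_eq_mul_inv, ← rpow_neg_one]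
        ring_nf
    _ ≤ C * (1 - r) ^ (a - 1) * angularMajorant a θ := by
        have := rpow_le_rpow_of_nonpos hr₀ hdist (show a - 1 ≤ 0 by linarith)
        have := norm_one_sub_circleMap_rpow_neg_le ha₀ (show 1 / 4 ≤ r by linarith) hθ.1 hθ.2
        gcongr C * ?_ * ?_

lemma exists_norm_taylorCoeff_le_rpow {h : ℂ → ℂ}
    (hd : DifferentiableOn ℂ h (Metric.ball 0 1)) {C δ : ℝ} (hδ₀ : 0 < δ) (hδ₁ : δ ≤ 1)
    (hC : ∀ s : ℂ, 1 / 2 ≤ ‖s‖ → ‖s‖ < 1 → ‖h s‖ ≤ C / ‖1 - s‖) :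
    ∃ C' : ℝ, ∀ n : ℕ, 2 ≤ n → ‖iteratedDeriv n h 0 / n.factorial‖ ≤ C' * (n : ℝ) ^ δ := by
  refine ⟨(2 * π)⁻¹ * (C * ∫ θ in 0..2 * π, angularMajorant (1 - δ) θ) * exp 2,
    fun n hn => ?_⟩
  have hn₂ : (2 : ℝ) ≤ n := by exact_mod_cast hn
  have hinv : (n : ℝ)⁻¹ ≤ 1 / 2 := by
    rw [one_div]; exact inv_anti₀ two_pos hn₂
  have hinv₀ : 0 < (n : ℝ)⁻¹ := by positivity
  have hr : 1 / 2 ≤ 1 - (n : ℝ)⁻¹ := by linarith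
  have hr₁ : 1 - (n : ℝ)⁻¹ < 1 := by linarith
  have hint := integral_norm_circleMap_le hd (a := 1 - δ) (by linarith) (by linarith) hr hr₁ hC
  have hscale : (1 - (1 - (n : ℝ)⁻¹)) ^ (1 - δ - 1) = (n : ℝ) ^ δ := by
    rw [sub_sub_cancel, sub_sub_cancel_left, inv_rpow (by positivity), rpow_neg (by positivity),
      inv_inv]
  rw [hscale] at hint
  have hnonneg : 0 ≤ ∫ θ in 0..2 * π, ‖h (circleMap 0 (1 - (n : ℝ)⁻¹) θ)‖ :=
    integral_nonneg (by positivity) fun _ _ => norm_nonneg _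
  calc ‖iteratedDeriv n h 0 / n.factorial‖
      ≤ (2 * π)⁻¹ * (∫ θ in 0..2 * π, ‖h (circleMap 0 (1 - (n : ℝ)⁻¹) θ)‖) *
          (1 - (n : ℝ)⁻¹)⁻¹ ^ n :=
        norm_iteratedDeriv_div_factorial_le (by linarith)
          (hd.mono (Metric.closedBall_subset_ball hr₁)) n
    _ ≤ (2 * π)⁻¹ * (C * (n : ℝ) ^ δ * ∫ θ in 0..2 * π, angularMajorant (1 - δ) θ) * exp 2 := by
        gcongr
        · exact mul_nonneg (by positivity) (hnonneg.trans hint)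
        · exact one_sub_inv_inv_pow_le_exp hn
    _ = _ := by ring

lemma factorial_mul_choose_add_sub_one (α : ℝ) (n : ℕ) :
    n.factorial * Ring.choose (α + n - 1) n = ∏ j ∈ Finset.range n, (α + j) := by
  have hpoch : (ascPochhammer ℝ n).eval α = ∏ j ∈ Finset.range n, (α + j) := by
    induction n with
    | zero => simp
    | succ n ih => rw [ascPochhammer_succ_eval, ih, Finset.prod_range_succ]
  rw [← Ring.multichoose_eq, ← nsmul_eq_mul, Ring.factorial_nsmul_multichoose_eq_ascPochhammer,
    Polynomial.ascPochhammer_smeval_eq_eval, hpoch]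

lemma tendsto_choose_div_rpow {α : ℝ} (hα : 0 < α) :
    Tendsto (fun n : ℕ => Ring.choose (α + n - 1) n / (n : ℝ) ^ (α - 1)) atTop
      (𝓝 (Gamma α)⁻¹) := by
  have hgamma := (GammaSeq_tendsto_Gamma α).inv₀ (Gamma_pos_of_pos hα).ne'
  have hratio : Tendsto (fun n : ℕ => (n : ℝ) / (n + α)) atTop (𝓝 1) :=
    tendsto_natCast_div_add_atTop α
  have hprod := hgamma.mul hratio
  rw [mul_one] at hprod
  refine hprod.congr' ?_
  filter_upwards [eventually_gt_atTop 0] with n hn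
  have hn₀ : (0 : ℝ) < n := by exact_mod_cast hn
  have hsucc : α + n ≠ 0 := by positivity
  rw [GammaSeq, Finset.prod_range_succ, ← factorial_mul_choose_add_sub_one, rpow_sub hn₀, rpow_one,
    add_comm (n : ℝ) α]
  field_simp

end CoefficientEstimates

section SquareRootSingularity

open Filter Topology Asymptotics Metric

/-- The region in which the generating function is compared with its singular expansion at `1`.
The inner radius only keeps it away from `0`. -/
def singularAnnulus : Set ℂ := {s | 1 / 4 < ‖s‖ ∧ ‖s‖ < 1}

/-- The principal branch of `√(1 - s)`. -/
noncomputable def sqrtOneSub (s : ℂ) : ℂ := (1 - s) ^ (1 / 2 : ℂ)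

lemma isOpen_singularAnnulus : IsOpen singularAnnulus :=
  (isOpen_lt continuous_const continuous_norm).inter (isOpen_lt continuous_norm continuous_const)

lemma sqrtOneSub_sq (s : ℂ) : sqrtOneSub s ^ 2 = 1 - s := by
  rw [sqrtOneSub, ← Complex.cpow_nat_mul]; norm_num

lemma one_sub_cpow_three_halves (s : ℂ) : (1 - s) ^ (3 / 2 : ℂ) = sqrtOneSub s ^ 3 := by
  rw [sqrtOneSub, ← Complex.cpow_nat_mul]; norm_num

lemma norm_sqrtOneSub_sq (s : ℂ) : ‖sqrtOneSub s‖ ^ 2 = ‖1 - s‖ := by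
  rw [← norm_pow, sqrtOneSub_sq]

lemma norm_sqrtOneSub_le_of_norm_one_sub_le {s t : ℂ} (h : ‖1 - s‖ ≤ ‖1 - t‖) :
    ‖sqrtOneSub s‖ ≤ ‖sqrtOneSub t‖ :=
  le_of_sq_le_sq (by simpa only [norm_sqrtOneSub_sq] using h) (norm_nonneg _)

lemma re_lt_one_of_norm_lt_one {s : ℂ} (hs : ‖s‖ < 1) : s.re < 1 :=
  (Complex.re_le_norm s).trans_lt hs

lemma sqrtOneSub_ne_zero {s : ℂ} (hs : ‖s‖ < 1) : sqrtOneSub s ≠ 0 := by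
  intro h
  have hone : 1 - s = 0 := by rw [← sqrtOneSub_sq, h, zero_pow two_ne_zero]
  simp [← sub_eq_zero.1 hone] at hs

lemma norm_sqrtOneSub_le_two {s : ℂ} (hs : ‖s‖ < 1) : ‖sqrtOneSub s‖ ≤ 2 := by
  refine le_of_sq_le_sq ?_ zero_le_two
  rw [norm_sqrtOneSub_sq]
  linarith [norm_sub_le 1 s, norm_one (α := ℂ)]

lemma norm_sqrtOneSub_le_two_mul_re {s : ℂ} (hs : ‖s‖ < 1) :
    ‖sqrtOneSub s‖ ≤ 2 * (sqrtOneSub s).re := by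
  have hre : 0 ≤ (sqrtOneSub s).re := by
    have hhalf : (1 / 2 : ℂ) = ((1 / 2 : ℝ) : ℂ) := by norm_num
    rw [sqrtOneSub, hhalf, Complex.cpow_ofReal_re]
    refine mul_nonneg (by positivity) (Real.cos_nonneg_of_mem_Icc ?_)
    constructor <;> linarith [Complex.neg_pi_lt_arg (1 - s), Complex.arg_le_pi (1 - s)]
  have hsq : 0 < (sqrtOneSub s).re ^ 2 - (sqrtOneSub s).im ^ 2 := by
    have := congrArg Complex.re (sqrtOneSub_sq s)
    rw [sq, Complex.mul_re, Complex.sub_re, Complex.one_re] at this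
    linarith [re_lt_one_of_norm_lt_one hs]
  refine le_of_sq_le_sq ?_ (by linarith)
  rw [Complex.sq_norm, Complex.normSq_apply]
  nlinarith

lemma norm_one_sub_sq_le {s : ℂ} (hs : ‖s‖ ≤ 1) : ‖1 - s‖ ^ 2 ≤ 2 * (1 - s.re) := by
  have hsq : ‖s‖ ^ 2 ≤ 1 := pow_le_one₀ (norm_nonneg s) hs
  rw [Complex.sq_norm, Complex.normSq_apply] at hsq ⊢
  simp only [Complex.sub_re, Complex.one_re, Complex.sub_im, Complex.one_im]
  nlinarith

section Zpow

variable {f g : ℂ → ℂ} {j k : ℤ}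

lemma sqrtOneSub_zpow_isBigO_of_le (h : j ≤ k) :
    (sqrtOneSub · ^ k) =O[𝓟 singularAnnulus] (sqrtOneSub · ^ j) := by
  obtain ⟨m, rfl⟩ := Int.le.dest h
  refine isBigO_principal.2 ⟨2 ^ m, fun s hs => ?_⟩
  have := norm_sqrtOneSub_le_two hs.2
  rw [zpow_add₀ (sqrtOneSub_ne_zero hs.2), zpow_natCast, norm_mul, mul_comm, norm_pow]
  gcongr

lemma mul_isBigO_sqrtOneSub_zpow (hf : f =O[𝓟 singularAnnulus] (sqrtOneSub · ^ j))
    (hg : g =O[𝓟 singularAnnulus] (sqrtOneSub · ^ k)) :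
    (fun s => f s * g s) =O[𝓟 singularAnnulus] (sqrtOneSub · ^ (j + k)) :=
  (hf.mul hg).congr' .rfl <| eventually_principal.2 fun _ hs =>
    (zpow_add₀ (sqrtOneSub_ne_zero hs.2) j k).symm

lemma isBigO_sqrtOneSub_zpow_of_mul
    (hfg : (fun s => f s * g s) =O[𝓟 singularAnnulus] (sqrtOneSub · ^ (j + k)))
    (hg : (sqrtOneSub · ^ k) =O[𝓟 singularAnnulus] g) :
    f =O[𝓟 singularAnnulus] (sqrtOneSub · ^ j) := by
  have hprod := ((isBigO_refl f _).mul hg).trans hfg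
  have hcancel := mul_isBigO_sqrtOneSub_zpow hprod (isBigO_refl (sqrtOneSub · ^ (-k)) _)
  rw [add_neg_cancel_right] at hcancel
  refine hcancel.congr' (eventually_principal.2 fun s hs => ?_) .rfl
  simp only [zpow_neg, mul_inv_cancel_right₀ (zpow_ne_zero k (sqrtOneSub_ne_zero hs.2))]

end Zpow

lemma norm_le_mul_norm_one_sub_of_norm_deriv_le {g : ℂ → ℂ} {δ L : ℝ} (hδ : 0 < δ)
    (hg : ∀ t ∈ ball 0 1 ∩ closedBall 1 δ, DifferentiableAt ℂ g t)
    (hL : ∀ t ∈ ball 0 1 ∩ closedBall 1 δ, ‖deriv g t‖ ≤ L)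
    (hlim : Tendsto (fun t : ℝ => g t) (𝓝[<] 1) (𝓝 0)) {s : ℂ}
    (hs : s ∈ ball 0 1 ∩ closedBall 1 δ) : ‖g s‖ ≤ L * ‖1 - s‖ := by
  have hconv : Convex ℝ (ball (0 : ℂ) 1 ∩ closedBall 1 δ) :=
    (convex_ball _ _).inter (convex_closedBall _ _)
  have hmem : ∀ᶠ t : ℝ in 𝓝[<] 1, (t : ℂ) ∈ ball (0 : ℂ) 1 ∩ closedBall 1 δ := by
    filter_upwards [Ioo_mem_nhdsLT (show max 0 (1 - δ) < 1 by simp [hδ])] with t ht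
    obtain ⟨hpos, hclose⟩ := max_lt_iff.1 ht.1
    refine ⟨by simpa [abs_of_pos hpos] using ht.2, ?_⟩
    rw [mem_closedBall, ← Complex.ofReal_one, Complex.dist_eq, ← Complex.ofReal_sub,
      Complex.norm_real, Real.norm_eq_abs, abs_le]
    constructor <;> linarith [ht.2]
  have hleft : Tendsto (fun t : ℝ => ‖g s - g t‖) (𝓝[<] 1) (𝓝 ‖g s‖) := by
    simpa using (tendsto_const_nhds (x := g s)).sub hlim |>.norm
  have hright : Tendsto (fun t : ℝ => L * ‖s - t‖) (𝓝[<] 1) (𝓝 (L * ‖s - (1 : ℝ)‖)) :=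
    (Continuous.tendsto (by fun_prop) _).mono_left nhdsWithin_le_nhds
  rw [norm_sub_rev, ← Complex.ofReal_one]
  exact le_of_tendsto_of_tendsto hleft hright <| hmem.mono fun t ht =>
    hconv.norm_image_sub_le_of_norm_deriv_le hg hL ht hs

lemma ball_inter_closedBall_subset_singularAnnulus {δ : ℝ} (hδ : δ ≤ 1 / 2) :
    ball 0 1 ∩ closedBall 1 δ ⊆ singularAnnulus := fun t ht => by
  rw [Set.mem_inter_iff, mem_ball_zero_iff, mem_closedBall, dist_comm, dist_eq_norm] at ht
  have := norm_sub_norm_le 1 t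
  exact ⟨by linarith [norm_one (α := ℂ)], ht.1⟩

lemma norm_le_mul_norm_sqrtOneSub_pow {g : ℂ → ℂ} {k : ℕ} {L : ℝ} (hL₀ : 0 ≤ L)
    (hg : DifferentiableOn ℂ g singularAnnulus)
    (hlim : Tendsto (fun t : ℝ => g t) (𝓝[<] 1) (𝓝 0))
    (hL : ∀ s ∈ singularAnnulus, ‖deriv g s‖ ≤ L * ‖sqrtOneSub s ^ k‖) {s : ℂ} (hs : ‖s‖ < 1)
    (hnear : ‖1 - s‖ ≤ 1 / 2) : ‖g s‖ ≤ L * ‖sqrtOneSub s ^ (k + 2)‖ := by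
  have hsub := ball_inter_closedBall_subset_singularAnnulus hnear
  have hpos : 0 < ‖1 - s‖ := by
    rw [← norm_sqrtOneSub_sq]
    exact pow_pos (norm_pos_iff.2 (sqrtOneSub_ne_zero hs)) 2
  have hderiv : ∀ t ∈ ball 0 1 ∩ closedBall 1 ‖1 - s‖, ‖deriv g t‖ ≤ L * ‖sqrtOneSub s ^ k‖ := by
    intro t ht
    have hle : ‖sqrtOneSub t‖ ≤ ‖sqrtOneSub s‖ := norm_sqrtOneSub_le_of_norm_one_sub_le (by
      rw [norm_sub_rev, ← dist_eq_norm]; exact ht.2)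
    refine (hL t (hsub ht)).trans ?_
    rw [norm_pow, norm_pow]
    gcongr
  have hbound := norm_le_mul_norm_one_sub_of_norm_deriv_le hpos
    (fun t ht => hg.differentiableAt (isOpen_singularAnnulus.mem_nhds (hsub ht))) hderiv hlim
    (s := s) ⟨mem_ball_zero_iff.2 hs, by rw [mem_closedBall, dist_comm, dist_eq_norm]⟩
  rwa [← sqrtOneSub_sq, mul_assoc, ← norm_mul, ← pow_add] at hbound

lemma isBigO_sqrtOneSub_pow_of_deriv {g : ℂ → ℂ} {k : ℕ}
    (hg : DifferentiableOn ℂ g singularAnnulus)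
    (hbdd : g =O[𝓟 singularAnnulus] fun _ => (1 : ℂ))
    (hlim : Tendsto (fun t : ℝ => g t) (𝓝[<] 1) (𝓝 0))
    (hderiv : deriv g =O[𝓟 singularAnnulus] (sqrtOneSub · ^ k)) :
    g =O[𝓟 singularAnnulus] (sqrtOneSub · ^ (k + 2)) := by
  obtain ⟨C, hC⟩ := isBigO_principal.1 hbdd
  obtain ⟨L, hL₀, hL⟩ := hderiv.exists_nonneg
  rw [isBigOWith_principal] at hL
  refine isBigO_principal.2 ⟨max L (C * 2 ^ (k + 2)), fun s hs => ?_⟩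
  rcases le_or_gt ‖1 - s‖ (1 / 2) with hnear | hfar
  · exact (norm_le_mul_norm_sqrtOneSub_pow hL₀ hg hlim hL hs.2 hnear).trans
      (by gcongr; exact le_max_left _ _)
  · have hroot : 1 / 2 ≤ ‖sqrtOneSub s‖ := by
      refine le_of_sq_le_sq ?_ (norm_nonneg _)
      rw [norm_sqrtOneSub_sq]; linarith
    calc ‖g s‖ ≤ C * ‖(1 : ℂ)‖ := hC s hs
      _ = C * 2 ^ (k + 2) * (1 / 2) ^ (k + 2) := by
          rw [mul_assoc, ← mul_pow]; norm_num
      _ ≤ max L (C * 2 ^ (k + 2)) * ‖sqrtOneSub s ^ (k + 2)‖ := by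
          rw [norm_pow]
          gcongr
          exact le_max_right _ _

/-- `D` solves `D D' = -M (1 - D)` on the annulus, where `M` is analytic up to the boundary and
`M 1 = κ > 0`, and `D` vanishes at `1` only. Integrating `(D²)' ≈ -2κ` near `1`
shows that `D` behaves like `√(2κ) * √(1 - s)`. -/
structure HasSqrtSingularity (D M : ℂ → ℂ) (κ : ℝ) : Prop where
  differentiableOn : DifferentiableOn ℂ D singularAnnulus
  bounded : D =O[𝓟 singularAnnulus] fun _ => (1 : ℂ)
  tendsto_zero : Tendsto (fun t : ℝ => D t) (𝓝[<] 1) (𝓝 0)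
  re_lower_bound : ∃ a > 0, ∀ s ∈ singularAnnulus, a * (1 - s.re) ≤ (D s).re
  analyticAt : ∀ s : ℂ, 1 / 4 ≤ ‖s‖ → ‖s‖ ≤ 1 → AnalyticAt ℂ M s
  apply_one : M 1 = κ
  pos : 0 < κ
  ode : ∀ s ∈ singularAnnulus, D s * deriv D s = -(M s * (1 - D s))

namespace HasSqrtSingularity

variable {D M : ℂ → ℂ} {κ : ℝ} (h : HasSqrtSingularity D M κ)
include h

lemma isBigO_one_of_continuousOn {f : ℂ → ℂ} (hf : ContinuousOn f {s | AnalyticAt ℂ M s}) :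
    f =O[𝓟 singularAnnulus] fun _ => (1 : ℂ) := by
  have hcompact : IsCompact (closedBall (0 : ℂ) 1 \ ball 0 (1 / 4)) :=
    (isCompact_closedBall 0 1).diff isOpen_ball
  have hsub : closedBall (0 : ℂ) 1 \ ball 0 (1 / 4) ⊆ {s | AnalyticAt ℂ M s} := fun s hs =>
    h.analyticAt s (by simpa using hs.2) (by simpa using hs.1)
  refine ((hf.mono hsub).isBigO_principal hcompact (by simp)).mono (principal_mono.2 ?_)
  exact fun s hs => ⟨by simpa using hs.2.le, by simpa using hs.1.le⟩

lemma coeff_isBigO_one : M =O[𝓟 singularAnnulus] fun _ => (1 : ℂ) :=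
  h.isBigO_one_of_continuousOn fun _ hs => hs.continuousAt.continuousWithinAt

lemma deriv_coeff_isBigO_one : deriv M =O[𝓟 singularAnnulus] fun _ => (1 : ℂ) :=
  h.isBigO_one_of_continuousOn fun _ hs => hs.deriv.continuousAt.continuousWithinAt

lemma coeff_sub_isBigO : (fun s => M s - κ) =O[𝓟 singularAnnulus] (sqrtOneSub · ^ (2 : ℤ)) := by
  have hone : AnalyticAt ℂ M 1 := h.analyticAt 1 (by norm_num) (by norm_num)
  have hslope : dslope M 1 =O[𝓟 singularAnnulus] fun _ => (1 : ℂ) :=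
    h.isBigO_one_of_continuousOn <| (continuousOn_dslope ((isOpen_analyticAt ℂ M).mem_nhds hone)).2
      ⟨fun _ hs => hs.continuousAt.continuousWithinAt, hone.differentiableAt⟩
  refine (hslope.mul (isBigO_refl (fun s => 1 - s) _)).neg_left.congr (fun s => ?_) fun s => ?_
  · have := sub_smul_dslope M 1 s
    rw [smul_eq_mul, h.apply_one] at this
    linear_combination this
  · rw [one_mul, ← sqrtOneSub_sq]; norm_cast

lemma one_sub_isBigO_one : (fun s => 1 - D s) =O[𝓟 singularAnnulus] fun _ => (1 : ℂ) :=
  (isBigO_refl _ _).sub h.bounded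

lemma hasDerivAt {s : ℂ} (hs : s ∈ singularAnnulus) : HasDerivAt D (deriv D s) s :=
  (h.differentiableOn.differentiableAt (isOpen_singularAnnulus.mem_nhds hs)).hasDerivAt

lemma sq_isBigO : (fun s => D s ^ 2) =O[𝓟 singularAnnulus] (sqrtOneSub · ^ 2) := by
  refine isBigO_sqrtOneSub_pow_of_deriv (k := 0) (h.differentiableOn.pow 2)
    (by simpa using h.bounded.pow 2) (by simpa using h.tendsto_zero.pow 2) ?_
  have hbound := (h.coeff_isBigO_one.mul h.one_sub_isBigO_one).const_mul_left (-2)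
  refine hbound.congr' (eventually_principal.2 fun s hs => ?_) (.of_forall fun s => by simp)
  rw [((h.hasDerivAt hs).fun_pow 2).deriv]
  linear_combination (-2) * h.ode s hs

lemma isBigO : D =O[𝓟 singularAnnulus] sqrtOneSub :=
  h.sq_isBigO.of_pow two_ne_zero

lemma coeff_mul_one_sub_sub_isBigO :
    (fun s => M s * (1 - D s) - κ) =O[𝓟 singularAnnulus] sqrtOneSub := by
  have hcoeff : (fun s => M s - κ) =O[𝓟 singularAnnulus] sqrtOneSub := by
    simpa using h.coeff_sub_isBigO.trans (sqrtOneSub_zpow_isBigO_of_le (show 1 ≤ 2 by norm_num))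
  refine ((hcoeff.mul h.one_sub_isBigO_one).congr_right fun _ => mul_one _).sub
    (h.isBigO.const_mul_left κ) |>.congr_left fun s => ?_
  ring

lemma sq_sub_isBigO :
    (fun s => D s ^ 2 - 2 * κ * (1 - s)) =O[𝓟 singularAnnulus] (sqrtOneSub · ^ 3) := by
  have hlinear : Tendsto (fun t : ℝ => (2 * κ * (1 - t) : ℂ)) (𝓝[<] 1) (𝓝 0) := by
    refine Tendsto.mono_left (Continuous.tendsto' (by fun_prop) _ _ ?_) nhdsWithin_le_nhds
    simp
  have hderiv {s : ℂ} (hs : s ∈ singularAnnulus) :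
      HasDerivAt (fun s => D s ^ 2 - 2 * κ * (1 - s)) (-2 * (M s * (1 - D s) - κ)) s := by
    convert! ((h.hasDerivAt hs).fun_pow 2).sub
      (((hasDerivAt_id s).const_sub 1).const_mul (2 * (κ : ℂ))) using 1
    linear_combination (-2) * h.ode s hs
  refine isBigO_sqrtOneSub_pow_of_deriv (k := 1)
    (fun s hs => (hderiv hs).differentiableAt.differentiableWithinAt) ?_
    (by simpa using (h.tendsto_zero.pow 2).sub hlinear) ?_
  · have hline : (fun s : ℂ => 1 - s) =O[𝓟 singularAnnulus] fun _ => (1 : ℂ) := by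
      refine (isBigO_refl _ _).sub (isBigO_principal.2 ⟨1, fun s hs => ?_⟩)
      simpa using hs.2.le
    exact (by simpa using h.bounded.pow 2 : (fun s => D s ^ 2) =O[𝓟 singularAnnulus] _).sub
      (hline.const_mul_left _)
  · refine (h.coeff_mul_one_sub_sub_isBigO.const_mul_left (-2)).congr'
      (eventually_principal.2 fun s hs => (hderiv hs).deriv.symm) (.of_forall fun s => by simp)

lemma sqrtOneSub_isBigO_add {c : ℝ} (hc : 0 < c) :
    sqrtOneSub =O[𝓟 singularAnnulus] fun s => D s + c * sqrtOneSub s := by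
  obtain ⟨a, ha, hre⟩ := h.re_lower_bound
  refine isBigO_principal.2 ⟨2 / c, fun s hs => ?_⟩
  have hnonneg : 0 ≤ (D s).re :=
    (mul_nonneg ha.le (sub_nonneg.2 (re_lt_one_of_norm_lt_one hs.2).le)).trans (hre s hs)
  rw [div_mul_eq_mul_div, le_div_iff₀ hc]
  calc ‖sqrtOneSub s‖ * c ≤ 2 * (sqrtOneSub s).re * c := by
        gcongr; exact norm_sqrtOneSub_le_two_mul_re hs.2
    _ ≤ 2 * (D s + c * sqrtOneSub s).re := by
        rw [Complex.add_re, Complex.re_ofReal_mul]; linarith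
    _ ≤ 2 * ‖D s + c * sqrtOneSub s‖ := by gcongr; exact Complex.re_le_norm _

lemma sub_sqrtOneSub_isBigO :
    (fun s => D s - √(2 * κ) * sqrtOneSub s) =O[𝓟 singularAnnulus] (sqrtOneSub · ^ (2 : ℤ)) := by
  have hsq : ((√(2 * κ) : ℝ) : ℂ) ^ 2 = 2 * κ := by
    exact_mod_cast Real.sq_sqrt (mul_pos two_pos h.pos).le
  refine isBigO_sqrtOneSub_zpow_of_mul (k := 1) (g := fun s => D s + √(2 * κ) * sqrtOneSub s) ?_
    (by simpa using h.sqrtOneSub_isBigO_add (Real.sqrt_pos.2 (mul_pos two_pos h.pos)))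
  refine h.sq_sub_isBigO.congr (fun s => ?_) fun s => ?_
  · rw [← sqrtOneSub_sq]
    linear_combination sqrtOneSub s ^ 2 * hsq
  · norm_cast

lemma sqrtOneSub_pow_four_isBigO : (sqrtOneSub · ^ (4 : ℤ)) =O[𝓟 singularAnnulus] D := by
  obtain ⟨a, ha, hre⟩ := h.re_lower_bound
  refine isBigO_principal.2 ⟨2 / a, fun s hs => ?_⟩
  have hpow : sqrtOneSub s ^ (4 : ℤ) = (1 - s) ^ 2 := by rw [← sqrtOneSub_sq, ← pow_mul]; norm_cast
  rw [hpow, norm_pow, div_mul_eq_mul_div, le_div_iff₀ ha]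
  have := norm_one_sub_sq_le hs.2.le
  nlinarith [hre s hs, Complex.re_le_norm (D s)]

lemma sqrtOneSub_zpow_isBigO_of_add_one {k : ℤ} (hk₀ : 0 ≤ k)
    (hk : (sqrtOneSub · ^ (k + 2)) =O[𝓟 singularAnnulus] D) :
    (sqrtOneSub · ^ (k + 1)) =O[𝓟 singularAnnulus] D := by
  have hD : (fun s => D s * sqrtOneSub s ^ k) =O[𝓟 singularAnnulus] D := by
    simpa using (isBigO_refl D (𝓟 singularAnnulus)).mul (sqrtOneSub_zpow_isBigO_of_le hk₀)
  have herr := mul_isBigO_sqrtOneSub_zpow h.sub_sqrtOneSub_isBigO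
    (isBigO_refl (sqrtOneSub · ^ k) _)
  rw [add_comm] at herr
  have hc : ((√(2 * κ) : ℝ) : ℂ) ≠ 0 := by
    exact_mod_cast (Real.sqrt_pos.2 (mul_pos two_pos h.pos)).ne'
  refine ((hD.sub (herr.trans hk)).const_mul_left (√(2 * κ) : ℂ)⁻¹).congr'
    (eventually_principal.2 fun s hs => ?_) .rfl
  simp only [zpow_add_one₀ (sqrtOneSub_ne_zero hs.2)]
  field_simp
  ring

lemma sqrtOneSub_isBigO : sqrtOneSub =O[𝓟 singularAnnulus] D := by
  have hcube : (sqrtOneSub · ^ (3 : ℤ)) =O[𝓟 singularAnnulus] D :=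
    h.sqrtOneSub_zpow_isBigO_of_add_one (k := 2) (by norm_num) h.sqrtOneSub_pow_four_isBigO
  have hsq : (sqrtOneSub · ^ (2 : ℤ)) =O[𝓟 singularAnnulus] D :=
    h.sqrtOneSub_zpow_isBigO_of_add_one (k := 1) (by norm_num) hcube
  simpa using h.sqrtOneSub_zpow_isBigO_of_add_one (k := 0) (by norm_num) hsq

lemma ne_zero {s : ℂ} (hs : s ∈ singularAnnulus) : D s ≠ 0 := fun hD => by
  obtain ⟨C, hC⟩ := isBigO_principal.1 h.sqrtOneSub_isBigO
  have := hC s hs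
  rw [hD, norm_zero, mul_zero] at this
  exact sqrtOneSub_ne_zero hs.2 (norm_le_zero_iff.1 this)

lemma inv_isBigO : (fun s => (D s)⁻¹) =O[𝓟 singularAnnulus] (sqrtOneSub · ^ (-1 : ℤ)) := by
  simpa using h.sqrtOneSub_isBigO.inv_rev (eventually_principal.2 fun s hs h₀ =>
    absurd h₀ (sqrtOneSub_ne_zero hs.2))

lemma deriv_deriv_eq {s : ℂ} (hs : s ∈ singularAnnulus) :
    deriv (deriv D) s = -(deriv M s * (1 - D s)) * (D s)⁻¹ - M s ^ 2 * (1 - D s) * (D s)⁻¹ ^ 2 -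
      (M s * (1 - D s)) ^ 2 * (D s)⁻¹ ^ 3 := by
  have hderiv {t : ℂ} (ht : t ∈ singularAnnulus) : deriv D t = -(M t * (1 - D t)) / D t := by
    rw [eq_div_iff (h.ne_zero ht), mul_comm, h.ode t ht]
  have heq : deriv D =ᶠ[𝓝 s] fun t => -(M t * (1 - D t)) / D t := by
    filter_upwards [isOpen_singularAnnulus.mem_nhds hs] with t ht using hderiv ht
  have hM := (h.analyticAt s hs.1.le hs.2.le).differentiableAt.hasDerivAt
  have hD := h.hasDerivAt hs
  have hD₀ := h.ne_zero hs
  rw [heq.deriv_eq, ((hM.fun_mul (hD.const_sub 1)).fun_neg.fun_div hD hD₀).deriv, hderiv hs]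
  field_simp
  ring

lemma inv_sub_inv_isBigO :
    (fun s => (D s)⁻¹ - (√(2 * κ) * sqrtOneSub s)⁻¹) =O[𝓟 singularAnnulus]
      (sqrtOneSub · ^ (0 : ℤ)) := by
  have hc : ((√(2 * κ) : ℝ) : ℂ) ≠ 0 := by
    exact_mod_cast (Real.sqrt_pos.2 (mul_pos two_pos h.pos)).ne'
  have hprod := mul_isBigO_sqrtOneSub_zpow (mul_isBigO_sqrtOneSub_zpow h.sub_sqrtOneSub_isBigO
    h.inv_isBigO) (isBigO_refl (sqrtOneSub · ^ (-1 : ℤ)) _)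
  refine (hprod.const_mul_left (-(√(2 * κ) : ℂ)⁻¹)).congr'
    (eventually_principal.2 fun s hs => ?_) .rfl
  have := h.ne_zero hs
  have := sqrtOneSub_ne_zero hs.2
  simp only [zpow_neg_one]
  field_simp
  ring

lemma inv_pow_three_sub_isBigO :
    (fun s => (D s)⁻¹ ^ 3 - (√(2 * κ) * sqrtOneSub s)⁻¹ ^ 3) =O[𝓟 singularAnnulus]
      (sqrtOneSub · ^ (-2 : ℤ)) := by
  have hroot : (fun s => (√(2 * κ) * sqrtOneSub s)⁻¹) =O[𝓟 singularAnnulus]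
      (sqrtOneSub · ^ (-1 : ℤ)) :=
    ((isBigO_refl _ _).const_mul_left (√(2 * κ) : ℂ)⁻¹).congr_left fun s => by
      rw [zpow_neg_one, mul_inv]
  have hquad := ((mul_isBigO_sqrtOneSub_zpow h.inv_isBigO h.inv_isBigO).add
    (mul_isBigO_sqrtOneSub_zpow h.inv_isBigO hroot)).add (mul_isBigO_sqrtOneSub_zpow hroot hroot)
  refine (mul_isBigO_sqrtOneSub_zpow h.inv_sub_inv_isBigO hquad).congr_left fun s => ?_
  ring

lemma sq_coeff_sub_isBigO :
    (fun s => (M s * (1 - D s)) ^ 2 - κ ^ 2) =O[𝓟 singularAnnulus] (sqrtOneSub · ^ (1 : ℤ)) := by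
  have hsum : (fun s => M s * (1 - D s) + κ) =O[𝓟 singularAnnulus] fun _ => (1 : ℂ) :=
    ((h.coeff_isBigO_one.mul h.one_sub_isBigO_one).congr_right fun _ => mul_one _).add
      (isBigO_const_one ℂ (κ : ℂ) _)
  refine (h.coeff_mul_one_sub_sub_isBigO.mul hsum).congr (fun s => ?_) fun s => ?_
  · ring
  · simp

theorem deriv_deriv_add_isBigO :
    (fun s => deriv (deriv D) s + (√(2 * κ) / 4 : ℝ) * (sqrtOneSub s ^ 3)⁻¹)
      =O[𝓟 singularAnnulus] (sqrtOneSub · ^ (-2 : ℤ)) := by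
  have hsq : ((√(2 * κ) : ℝ) : ℂ) ^ 2 = 2 * κ := by
    exact_mod_cast Real.sq_sqrt (mul_pos two_pos h.pos).le
  have hc : ((√(2 * κ) : ℝ) : ℂ) ≠ 0 := by
    exact_mod_cast (Real.sqrt_pos.2 (mul_pos two_pos h.pos)).ne'
  have hinv_sq := mul_isBigO_sqrtOneSub_zpow h.inv_isBigO h.inv_isBigO
  have hderiv : (fun s => deriv M s * (1 - D s) * (D s)⁻¹) =O[𝓟 singularAnnulus]
      (sqrtOneSub · ^ (-2 : ℤ)) := by
    refine IsBigO.trans ?_ (sqrtOneSub_zpow_isBigO_of_le (show -2 ≤ -1 by norm_num))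
    simpa using (h.deriv_coeff_isBigO_one.mul h.one_sub_isBigO_one).mul h.inv_isBigO
  have hsquare : (fun s => M s ^ 2 * (1 - D s) * (D s)⁻¹ ^ 2) =O[𝓟 singularAnnulus]
      (sqrtOneSub · ^ (-2 : ℤ)) := by
    simpa [sq] using ((h.coeff_isBigO_one.pow 2).mul h.one_sub_isBigO_one).mul hinv_sq
  have hcube : (fun s => ((M s * (1 - D s)) ^ 2 - κ ^ 2) * (D s)⁻¹ ^ 3) =O[𝓟 singularAnnulus]
      (sqrtOneSub · ^ (-2 : ℤ)) := by
    refine (mul_isBigO_sqrtOneSub_zpow h.sq_coeff_sub_isBigO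
      (mul_isBigO_sqrtOneSub_zpow h.inv_isBigO hinv_sq)).congr_left fun s => ?_
    ring
  refine (((hderiv.neg_left.sub hsquare).sub hcube).sub
    (h.inv_pow_three_sub_isBigO.const_mul_left ((κ : ℂ) ^ 2))).congr'
    (eventually_principal.2 fun s hs => ?_) .rfl
  have hw := sqrtOneSub_ne_zero hs.2
  have hlead : (√(2 * κ) / 4 : ℝ) * (sqrtOneSub s ^ 3)⁻¹ =
      (κ : ℂ) ^ 2 * (√(2 * κ) * sqrtOneSub s)⁻¹ ^ 3 := by
    push_cast
    field_simp
    linear_combination (((√(2 * κ) : ℝ) : ℂ) ^ 2 + 2 * κ) * hsq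
  simp only [h.deriv_deriv_eq hs, hlead]
  ring

end HasSqrtSingularity

end SquareRootSingularity

section Transfer

open Filter Topology Asymptotics Metric

/-- The power series `∑ f n * s ^ n`, with the value `0` where it does not converge. -/
noncomputable def genFun (f : ℕ → ℝ) (s : ℂ) : ℂ := ∑' n, (f n : ℂ) * s ^ n

variable {f : ℕ → ℝ}

lemma genFun_one (f : ℕ → ℝ) : genFun f 1 = (∑' n, f n : ℝ) := by
  simp [genFun, Complex.ofReal_tsum]

lemma norm_coeff_mul_pow_le (hf : ∀ n, 0 ≤ f n) {s : ℂ} (hs : ‖s‖ ≤ 1) (n : ℕ) :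
    ‖(f n : ℂ) * s ^ n‖ ≤ f n := by
  rw [norm_mul, norm_pow, Complex.norm_of_nonneg (hf n)]
  exact mul_le_of_le_one_right (hf n) (pow_le_one₀ (norm_nonneg s) hs)

variable (hf : ∀ n, 0 ≤ f n) (hsum : Summable f)
include hf hsum

lemma hasSum_genFun {s : ℂ} (hs : ‖s‖ ≤ 1) :
    HasSum (fun n => (f n : ℂ) * s ^ n) (genFun f s) :=
  (Summable.of_norm_bounded hsum (norm_coeff_mul_pow_le hf hs)).hasSum

lemma norm_genFun_le {s : ℂ} (hs : ‖s‖ ≤ 1) : ‖genFun f s‖ ≤ ∑' n, f n :=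
  tsum_of_norm_bounded hsum.hasSum (norm_coeff_mul_pow_le hf hs)

lemma continuousOn_genFun : ContinuousOn (genFun f) (closedBall 0 1) :=
  continuousOn_tsum (fun n => by fun_prop) hsum fun n _ hs =>
    norm_coeff_mul_pow_le hf (by simpa using hs) n

lemma tendsto_genFun_ofReal :
    Tendsto (fun t : ℝ => genFun f t) (𝓝[<] 1) (𝓝 (genFun f 1)) := by
  have hcont : ContinuousWithinAt (genFun f) (closedBall 0 1) 1 :=
    continuousOn_genFun hf hsum 1 (by simp)
  refine hcont.tendsto.comp (tendsto_nhdsWithin_iff.2 ⟨?_, ?_⟩)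
  · simpa using (Complex.continuous_ofReal.tendsto 1).mono_left nhdsWithin_le_nhds
  · filter_upwards [Ioo_mem_nhdsLT zero_lt_one] with t ht
    simpa [abs_of_pos ht.1] using ht.2.le

lemma mul_one_sub_re_le_re_genFun {s : ℂ} (hs : ‖s‖ ≤ 1) (m : ℕ) :
    f m * (1 - (s ^ m).re) ≤ (genFun f 1 - genFun f s).re := by
  have hdiff : HasSum (fun n => f n - ((f n : ℂ) * s ^ n).re) (genFun f 1 - genFun f s).re := by
    rw [genFun_one, Complex.sub_re, Complex.ofReal_re]
    exact hsum.hasSum.sub (Complex.hasSum_re (hasSum_genFun hf hsum hs))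
  have hterm := le_hasSum hdiff m fun n _ =>
    sub_nonneg.2 ((Complex.re_le_norm _).trans (norm_coeff_mul_pow_le hf hs n))
  rwa [Complex.re_ofReal_mul, ← mul_one_sub] at hterm

lemma hasFPowerSeriesOnBall_genFun :
    HasFPowerSeriesOnBall (genFun f)
      (FormalMultilinearSeries.ofScalars ℂ fun n => (f n : ℂ)) 0 1 := by
  have hradius : 1 ≤ (FormalMultilinearSeries.ofScalars ℂ fun n => (f n : ℂ)).radius := by
    refine FormalMultilinearSeries.le_radius_of_summable_norm (r := 1) _ ?_
    simpa [FormalMultilinearSeries.ofScalars_norm, abs_of_nonneg (hf _)] using hsum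
  have hseries := (FormalMultilinearSeries.hasFPowerSeriesOnBall _
    (one_pos.trans_le hradius)).mono one_pos hradius
  convert! hseries using 1
  ext s
  simp [genFun, FormalMultilinearSeries.sum, mul_comm]

lemma differentiableOn_genFun : DifferentiableOn ℂ (genFun f) (ball 0 1) := by
  simpa [← Metric.eball_ofReal] using (hasFPowerSeriesOnBall_genFun hf hsum).differentiableOn

lemma taylorCoeff_genFun (n : ℕ) : iteratedDeriv n (genFun f) 0 / n.factorial = f n := by
  have hps := hasFPowerSeriesOnBall_genFun hf hsum
  exact congrFun (FormalMultilinearSeries.ofScalars_series_injective ℂ ℂ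
    (hps.analyticAt.hasFPowerSeriesAt.eq_formalMultilinearSeries hps.hasFPowerSeriesAt)) n

lemma taylorCoeff_deriv_deriv_genFun (n : ℕ) :
    iteratedDeriv n (deriv (deriv (genFun f))) 0 / n.factorial =
      (((n : ℝ) + 2) * (n + 1) * f (n + 2) : ℝ) := by
  push_cast
  rw [← iteratedDeriv_succ', ← iteratedDeriv_succ', ← taylorCoeff_genFun hf hsum (n + 2),
    Nat.factorial_succ, Nat.factorial_succ]
  have hfactorial : (n.factorial : ℂ) ≠ 0 := by exact_mod_cast n.factorial_ne_zero
  have hsucc : (n : ℂ) + 1 ≠ 0 := by exact_mod_cast n.succ_ne_zero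
  have hsucc' : (n : ℂ) + 1 + 1 ≠ 0 := by exact_mod_cast (n + 1).succ_ne_zero
  push_cast
  rw [show (n : ℂ) + 2 = n + 1 + 1 by ring]
  field_simp

omit hf hsum in
lemma taylorCoeff_sub_const_mul_one_div_one_sub_cpow {g : ℂ → ℂ}
    (hg : DifferentiableOn ℂ g (ball 0 1)) (a b : ℂ) (n : ℕ) :
    iteratedDeriv n (fun s => g s - b * (1 / (1 - s) ^ a)) 0 / n.factorial =
      iteratedDeriv n g 0 / n.factorial - b * Ring.choose (a + n - 1) n := by
  have hseries := (hg.analyticAt (ball_mem_nhds 0 one_pos)).hasFPowerSeriesAt.sub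
    ((Complex.one_div_one_sub_cpow_hasFPowerSeriesOnBall_zero a).hasFPowerSeriesAt.const_smul
      (c := b))
  rw [← FormalMultilinearSeries.ofScalars_smul, ← FormalMultilinearSeries.ofScalars_sub] at hseries
  exact congrFun (FormalMultilinearSeries.ofScalars_series_injective ℂ ℂ
    (hseries.analyticAt.hasFPowerSeriesAt.eq_formalMultilinearSeries hseries)) n

lemma hasSqrtSingularity_one_sub_genFun (hone : ∑' n, f n = 1) (hf₁ : 0 < f 1) {K : ℂ → ℂ}
    {κ R : ℝ} (hR : 1 < R) (hK : DifferentiableOn ℂ K (ball 0 R)) (hκ : 0 < κ) (hK₁ : K 1 = κ)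
    (hode : ∀ s : ℂ, ‖s‖ < 1 → s * deriv (genFun f) s * (1 - genFun f s) = genFun f s * K s) :
    HasSqrtSingularity (fun s => 1 - genFun f s) (fun s => K s / s) κ where
  differentiableOn := ((differentiableOn_genFun hf hsum).mono fun s hs => by
    simpa using hs.2).const_sub 1
  bounded := isBigO_principal.2 ⟨2, fun s hs => by
    have hle := norm_genFun_le hf hsum hs.2.le
    calc ‖1 - genFun f s‖ ≤ ‖(1 : ℂ)‖ + ‖genFun f s‖ := norm_sub_le _ _
      _ ≤ 2 * ‖(1 : ℂ)‖ := by rw [norm_one]; linarith⟩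
  tendsto_zero := by
    simpa [genFun_one, hone] using (tendsto_genFun_ofReal hf hsum).const_sub (1 : ℂ)
  re_lower_bound := ⟨f 1, hf₁, fun s hs => by
    simpa [genFun_one, hone] using mul_one_sub_re_le_re_genFun hf hsum hs.2.le 1⟩
  analyticAt s hs hs₁ :=
    (hK.analyticAt (isOpen_ball.mem_nhds (by simpa using hs₁.trans_lt hR))).div analyticAt_id
      (norm_pos_iff.1 (lt_of_lt_of_le (by norm_num) hs))
  apply_one := by rw [div_one, hK₁]
  pos := hκ
  ode s hs := by
    have hs₀ : s ≠ 0 := norm_pos_iff.1 (lt_trans (by norm_num) hs.1)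
    rw [deriv_const_sub]
    field_simp
    linear_combination -hode s hs.2

omit hf hsum in
lemma tendsto_rpow_half_div_mul_div :
    Tendsto (fun n : ℕ => ((n : ℝ) / (n + 2)) ^ (1 / 2 : ℝ) * (((n : ℝ) + 2) / (n + 1)))
      atTop (𝓝 1) := by
  have hone : Tendsto (fun n : ℕ => (n : ℝ) / (n + 1)) atTop (𝓝 1) :=
    tendsto_natCast_div_add_atTop 1
  have htwo : Tendsto (fun n : ℕ => (n : ℝ) / (n + 2)) atTop (𝓝 1) :=
    tendsto_natCast_div_add_atTop 2
  have hprod := (htwo.rpow_const (p := 1 / 2) (by norm_num)).mul (hone.div htwo one_ne_zero)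
  simp only [Real.one_rpow, div_one, mul_one] at hprod
  refine hprod.congr' ?_
  filter_upwards [eventually_gt_atTop 0] with n hn
  have hn₀ : (n : ℝ) ≠ 0 := by positivity
  rw [Pi.div_apply, div_div_div_cancel_left' _ _ hn₀]

omit hf hsum in
lemma tendsto_rpow_three_halves_mul_of_abs_sub_le {b C L δ : ℝ} {g : ℕ → ℝ} (hδ : δ < 1 / 2)
    (hg : Tendsto (fun n : ℕ => g n / (n : ℝ) ^ (1 / 2 : ℝ)) atTop (𝓝 L))
    (h : ∀ n : ℕ, 2 ≤ n → |((n : ℝ) + 2) * (n + 1) * f (n + 2) - b * g n| ≤ C * (n : ℝ) ^ δ) :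
    Tendsto (fun n : ℕ => (n : ℝ) ^ (3 / 2 : ℝ) * f n) atTop (𝓝 (b * L)) := by
  rw [← tendsto_add_atTop_iff_nat 2]
  have herror : Tendsto (fun n : ℕ => (((n : ℝ) + 2) * (n + 1) * f (n + 2) - b * g n) /
      (n : ℝ) ^ (1 / 2 : ℝ)) atTop (𝓝 0) := by
    have hbound : Tendsto (fun n : ℕ => C * (n : ℝ) ^ (-(1 / 2 - δ))) atTop (𝓝 (C * 0)) :=
      ((tendsto_rpow_neg_atTop (sub_pos.2 hδ)).comp tendsto_natCast_atTop_atTop).const_mul C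
    rw [mul_zero] at hbound
    refine squeeze_zero_norm' ?_ hbound
    filter_upwards [eventually_ge_atTop 2] with n hn
    have hn₀ : (0 : ℝ) < n := by positivity
    rw [norm_div, Real.norm_eq_abs, Real.norm_of_nonneg (by positivity : 0 ≤ (n : ℝ) ^ (1 / 2 : ℝ)),
      div_le_iff₀ (by positivity), mul_assoc C, ← Real.rpow_add hn₀]
    simpa using h n hn
  have hmain : Tendsto (fun n : ℕ => ((n : ℝ) + 2) * (n + 1) * f (n + 2) /
      (n : ℝ) ^ (1 / 2 : ℝ)) atTop (𝓝 (b * L)) := by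
    simpa only [zero_add, sub_div, mul_div_assoc, sub_add_cancel] using
      herror.add (hg.const_mul b)
  have hprod := hmain.mul tendsto_rpow_half_div_mul_div
  rw [mul_one] at hprod
  refine hprod.congr' ?_
  filter_upwards [eventually_gt_atTop 0] with n hn
  have hn₀ : (0 : ℝ) < n := by exact_mod_cast hn
  have hpow : ((n : ℝ) + 2) ^ (3 / 2 : ℝ) * ((n : ℝ) + 2) ^ (1 / 2 : ℝ) = (n + 2) ^ 2 := by
    rw [← Real.rpow_add (by positivity)]; norm_num
  rw [Real.div_rpow hn₀.le (by positivity)]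
  push_cast
  field_simp
  linear_combination -f (n + 2) * hpow

theorem tendsto_rpow_three_halves_mul_coeff (hone : ∑' n, f n = 1) (hf₁ : 0 < f 1) {K : ℂ → ℂ}
    {κ R : ℝ} (hR : 1 < R) (hK : DifferentiableOn ℂ K (ball 0 R)) (hκ : 0 < κ) (hK₁ : K 1 = κ)
    (hode : ∀ s : ℂ, ‖s‖ < 1 → s * deriv (genFun f) s * (1 - genFun f s) = genFun f s * K s) :
    Tendsto (fun n : ℕ => (n : ℝ) ^ (3 / 2 : ℝ) * f n) atTop
      (𝓝 (√(2 * κ) / 4 * (Real.Gamma (3 / 2))⁻¹)) := by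
  have hsing := hasSqrtSingularity_one_sub_genFun hf hsum hone hf₁ hR hK hκ hK₁ hode
  have hderiv : DifferentiableOn ℂ (deriv (deriv (genFun f))) (ball 0 1) :=
    ((differentiableOn_genFun hf hsum).deriv isOpen_ball).deriv isOpen_ball
  set remainder : ℂ → ℂ := fun s =>
    deriv (deriv (genFun f)) s - (√(2 * κ) / 4 : ℝ) * (1 / (1 - s) ^ (3 / 2 : ℂ)) with hremainder
  have hdiff : DifferentiableOn ℂ remainder (ball 0 1) := by
    refine hderiv.sub (.const_mul ?_ _)
    simpa [← Metric.eball_ofReal] using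
      (Complex.one_div_one_sub_cpow_hasFPowerSeriesOnBall_zero (3 / 2)).differentiableOn
  obtain ⟨C, hC⟩ := isBigO_principal.1 hsing.deriv_deriv_add_isBigO
  obtain ⟨C', hC'⟩ := exists_norm_taylorCoeff_le_rpow hdiff (C := C) (δ := 1 / 4) (by norm_num)
    (by norm_num) fun s hs hs₁ => by
      have hbound := hC s ⟨lt_of_lt_of_le (by norm_num) hs, hs₁⟩
      rw [norm_zpow, zpow_neg, zpow_ofNat, norm_sqrtOneSub_sq, ← div_eq_mul_inv] at hbound
      refine le_of_eq_of_le ?_ hbound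
      rw [← norm_neg, hremainder, ← one_sub_cpow_three_halves]
      simp only [deriv_const_sub', deriv.fun_neg, one_div]
      congr 1
      ring
  have hchoose := tendsto_choose_div_rpow (α := 3 / 2) (by norm_num)
  refine tendsto_rpow_three_halves_mul_of_abs_sub_le (δ := 1 / 4) (C := C') (by norm_num)
    (by convert hchoose using 4; norm_num) fun n hn => ?_
  have hn := hC' n hn
  rw [hremainder, taylorCoeff_sub_const_mul_one_div_one_sub_cpow hderiv,
    taylorCoeff_deriv_deriv_genFun hf hsum,
    show (3 / 2 : ℂ) + n - 1 = ((3 / 2 + n - 1 : ℝ) : ℂ) by push_cast; rfl,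
    ← Complex.ofReal_choose, ← Complex.ofReal_mul, ← Complex.ofReal_sub, Complex.norm_real] at hn
  exact hn

end Transfer

/-- A rooted tree with vertex type `V`, encoded by its parent map. The root is its own parent, and
every vertex reaches the root by iterating the parent map. -/
@[ext]
structure ParentTree (V : Type*) where
  parent : V → V
  root : V
  parent_root : parent root = root
  exists_iterate_eq_root : ∀ v, ∃ k, parent^[k] v = root

namespace ParentTree

/-- An isomorphism of rooted trees. Commuting with the parent maps forces it to match the roots,
these being the only fixed points. -/
structure Iso {V W : Type*} (P : ParentTree V) (Q : ParentTree W) extends V ≃ W where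
  map_parent : ∀ v, toEquiv (P.parent v) = Q.parent (toEquiv v)

section Isomorphisms

variable {V W X : Type*} {P : ParentTree V} {Q : ParentTree W} {R : ParentTree X}

instance : CoeFun (P.Iso Q) fun _ => V → W := ⟨fun e => e.toEquiv⟩

namespace Iso

lemma toEquiv_injective : Function.Injective (toEquiv : P.Iso Q → V ≃ W) := by
  rintro ⟨e, _⟩ ⟨e', _⟩ rfl
  rfl

@[ext]
lemma ext {e e' : P.Iso Q} (h : ∀ v, e v = e' v) : e = e' := toEquiv_injective (Equiv.ext h)

/-- The identity isomorphism. -/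
def refl (P : ParentTree V) : P.Iso P := ⟨Equiv.refl V, fun _ => rfl⟩

/-- The inverse isomorphism. -/
@[simps toEquiv]
def symm (e : P.Iso Q) : Q.Iso P :=
  ⟨e.toEquiv.symm, fun w => e.symm_apply_eq.2 <| by simp [e.map_parent]⟩

/-- The composite isomorphism. -/
@[simps toEquiv]
def trans (e : P.Iso Q) (e' : Q.Iso R) : P.Iso R :=
  ⟨e.toEquiv.trans e'.toEquiv, fun v => by simp [e.map_parent, e'.map_parent]⟩

end Iso

lemma eq_root_of_parent_eq_self {v : V} (h : P.parent v = v) : v = P.root := by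
  obtain ⟨k, hk⟩ := P.exists_iterate_eq_root v
  rwa [Function.iterate_fixed h] at hk

lemma Iso.map_root (e : P.Iso Q) : e P.root = Q.root :=
  eq_root_of_parent_eq_self (by rw [← e.map_parent, P.parent_root])

lemma Iso.map_iterate_parent (e : P.Iso Q) (k : ℕ) (v : V) :
    e (P.parent^[k] v) = Q.parent^[k] (e v) :=
  Function.Semiconj.iterate_right e.map_parent k v

end Isomorphisms

section Branches

variable {V W : Type*} (P : ParentTree V) {Q : ParentTree W} {c d v : V}

/-- `c` lies on the path from `v` to the root; every vertex is its own ancestor. -/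
def IsAncestor (c v : V) : Prop := ∃ k, P.parent^[k] v = c

/-- `c` is a neighbour of the root. -/
def IsRootChild (c : V) : Prop := c ≠ P.root ∧ P.parent c = P.root

variable {P}

lemma isAncestor_self (c : V) : P.IsAncestor c c := ⟨0, rfl⟩

lemma isAncestor_of_isAncestor_parent (h : P.IsAncestor c (P.parent v)) : P.IsAncestor c v :=
  h.imp' (· + 1) fun _ hk => hk

lemma IsAncestor.parent (h : P.IsAncestor c v) (hv : v ≠ c) : P.IsAncestor c (P.parent v) := by
  obtain ⟨_ | k, hk⟩ := h
  exacts [absurd hk hv, ⟨k, hk⟩]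

@[elab_as_elim]
lemma IsAncestor.induction {motive : ∀ v, P.IsAncestor c v → Prop}
    (self : motive c (isAncestor_self c))
    (step : ∀ v (hv : v ≠ c) (h : P.IsAncestor c v), motive (P.parent v) (h.parent hv) → motive v h)
    {v : V} (h : P.IsAncestor c v) : motive v h := by
  obtain ⟨k, hk⟩ := h
  induction k generalizing v with
  | zero => obtain rfl : v = c := hk; exact self
  | succ k ih =>
    by_cases hv : v = c
    · subst hv; exact self
    · exact step v hv ⟨k + 1, hk⟩ (ih hk)

lemma not_isAncestor_root (hc : c ≠ P.root) : ¬P.IsAncestor c P.root := fun ⟨k, hk⟩ =>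
  hc (hk.symm.trans (Function.iterate_fixed P.parent_root k))

lemma IsRootChild.eq_of_isAncestor (hd : P.IsRootChild d) (hc : c ≠ P.root)
    (h : P.IsAncestor c d) : c = d := by
  by_contra hne
  exact not_isAncestor_root hc (hd.2 ▸ h.parent (Ne.symm hne))

lemma IsRootChild.eq_of_isAncestor_of_isAncestor (hc : P.IsRootChild c) (hd : P.IsRootChild d)
    (hcv : P.IsAncestor c v) (hdv : P.IsAncestor d v) : c = d := by
  induction hcv using IsAncestor.induction with
  | self => exact (hc.eq_of_isAncestor hd.1 hdv).symm
  | step v _ hcv ih =>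
    by_cases hv : v = d
    · exact hd.eq_of_isAncestor hc.1 (hv ▸ hcv)
    · exact ih (hdv.parent hv)

lemma Iso.isAncestor_iff (e : P.Iso Q) : Q.IsAncestor (e c) (e v) ↔ P.IsAncestor c v :=
  exists_congr fun k => by rw [← e.map_iterate_parent, e.toEquiv.injective.eq_iff]

lemma Iso.isRootChild_iff (e : P.Iso Q) : Q.IsRootChild (e c) ↔ P.IsRootChild c := by
  rw [IsRootChild, IsRootChild, ← e.map_parent, ← e.map_root, e.toEquiv.injective.ne_iff,
    e.toEquiv.injective.eq_iff]

variable (P) in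
/-- The subtree formed by `c` and its descendants, rooted at `c`. -/
noncomputable def branch (c : V) : ParentTree {v // P.IsAncestor c v} where
  parent v := if h : v = c then ⟨c, isAncestor_self c⟩ else ⟨P.parent v, v.2.parent h⟩
  root := ⟨c, isAncestor_self c⟩
  parent_root := dif_pos rfl
  exists_iterate_eq_root := by
    rintro ⟨v, hv⟩
    induction hv using IsAncestor.induction with
    | self => exact ⟨0, rfl⟩
    | step v hvc hv ih =>
      obtain ⟨k, hk⟩ := ih
      exact ⟨k + 1, by simpa [hvc] using hk⟩

lemma coe_branch_parent (v : {v // P.IsAncestor c v}) :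
    ((P.branch c).parent v : V) = if (v : V) = c then c else P.parent v := by
  dsimp only [branch]; split_ifs <;> rfl

variable (P) in
/-- The tree obtained by deleting the branch at `c`. -/
def rest (c : V) (hc : c ≠ P.root) : ParentTree {v // ¬P.IsAncestor c v} where
  parent v := ⟨P.parent v, mt isAncestor_of_isAncestor_parent v.2⟩
  root := ⟨P.root, not_isAncestor_root hc⟩
  parent_root := Subtype.ext P.parent_root
  exists_iterate_eq_root v := by
    obtain ⟨k, hk⟩ := P.exists_iterate_eq_root v
    exact ⟨k, Subtype.ext <|
      (Function.Semiconj.iterate_right (f := Subtype.val) (fun _ => rfl) k v).trans hk⟩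

/-- An isomorphism restricts to the branches at corresponding vertices. -/
def Iso.branch (e : P.Iso Q) (c : V) : (P.branch c).Iso (Q.branch (e c)) :=
  ⟨e.toEquiv.subtypeEquiv fun _ => e.isAncestor_iff.symm, fun v => Subtype.ext <| by
    change e ((P.branch c).parent v) = (Q.branch (e c)).parent _
    simp only [coe_branch_parent, apply_ite e, e.map_parent]
    simp [Equiv.subtypeEquiv]⟩

end Branches

end ParentTree

lemma exists_sumCongr_eq {V W V' W' : Type*} (e : V ⊕ W ≃ V' ⊕ W')
    (he : ∀ x, (e x).isLeft = x.isLeft) :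
    ∃ (e₁ : V ≃ V') (e₂ : W ≃ W'), e = Equiv.sumCongr e₁ e₂ := by
  have he' : ∀ y, (e.symm y).isLeft = y.isLeft := fun y => by
    rw [← he, Equiv.apply_symm_apply]
  choose f₁ hf₁ using fun v => Sum.isLeft_iff.1 (he (.inl v))
  choose f₂ hf₂ using fun w => Sum.isRight_iff.1 (Sum.isLeft_eq_false.1 (he (.inr w)))
  choose g₁ hg₁ using fun v => Sum.isLeft_iff.1 (he' (.inl v))
  choose g₂ hg₂ using fun w => Sum.isRight_iff.1 (Sum.isLeft_eq_false.1 (he' (.inr w)))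
  refine ⟨⟨f₁, g₁, fun v => ?_, fun v => ?_⟩, ⟨f₂, g₂, fun w => ?_, fun w => ?_⟩, ?_⟩
  · exact Sum.inl_injective (by rw [← hg₁, ← hf₁, Equiv.symm_apply_apply])
  · exact Sum.inl_injective (by rw [← hf₁, ← hg₁, Equiv.apply_symm_apply])
  · exact Sum.inr_injective (by rw [← hg₂, ← hf₂, Equiv.symm_apply_apply])
  · exact Sum.inr_injective (by rw [← hf₂, ← hg₂, Equiv.apply_symm_apply])
  · ext (v | w)
    exacts [hf₁ v, hf₂ w]

namespace ParentTree

section Graft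

variable {U V W V' W' : Type*} (P : ParentTree V) (Q : ParentTree W)

/-- The tree obtained from `P` and `Q` by making the root of `Q` a child of the root of `P`. -/
noncomputable def graft : ParentTree (V ⊕ W) where
  parent := Sum.elim (fun v => .inl (P.parent v))
    fun w => if w = Q.root then .inl P.root else .inr (Q.parent w)
  root := .inl P.root
  parent_root := by rw [Sum.elim_inl, P.parent_root]
  exists_iterate_eq_root := by
    rintro (v | w)
    · obtain ⟨k, hk⟩ := P.exists_iterate_eq_root v
      exact ⟨k, hk ▸ (Function.Semiconj.iterate_right (f := Sum.inl) (fun _ => rfl) k v).symm⟩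
    · induction Q.exists_iterate_eq_root w using IsAncestor.induction with
      | self => exact ⟨1, if_pos rfl⟩
      | step w hw _ ih =>
        obtain ⟨k, hk⟩ := ih
        exact ⟨k + 1, by simpa [hw] using hk⟩

@[simp] lemma graft_parent_inl (v : V) : (P.graft Q).parent (.inl v) = .inl (P.parent v) := rfl

@[simp] lemma graft_parent_inr (w : W) : (P.graft Q).parent (.inr w) =
    if w = Q.root then .inl P.root else .inr (Q.parent w) := rfl

@[simp] lemma graft_root : (P.graft Q).root = .inl P.root := rfl

lemma graft_iterate_parent_inl (k : ℕ) (v : V) :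
    (P.graft Q).parent^[k] (.inl v) = .inl (P.parent^[k] v) :=
  (Function.Semiconj.iterate_right (f := Sum.inl) (fun _ => rfl) k v).symm

lemma isRootChild_graft_inl {v : V} : (P.graft Q).IsRootChild (.inl v) ↔ P.IsRootChild v := by
  simp [IsRootChild]

lemma isRootChild_graft_inr {w : W} : (P.graft Q).IsRootChild (.inr w) ↔ w = Q.root := by
  simp [IsRootChild]

lemma isAncestor_graft_inl_inl {c v : V} :
    (P.graft Q).IsAncestor (.inl c) (.inl v) ↔ P.IsAncestor c v :=
  exists_congr fun k => by
    rw [graft_iterate_parent_inl, Sum.inl_injective.eq_iff]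

lemma not_isAncestor_graft_inr_inl (c : W) (v : V) :
    ¬(P.graft Q).IsAncestor (.inr c) (.inl v) := fun ⟨k, hk⟩ => by
  rw [graft_iterate_parent_inl] at hk
  exact Sum.inl_ne_inr hk

lemma isAncestor_graft_inr_root (w : W) :
    (P.graft Q).IsAncestor (.inr Q.root) (.inr w) := by
  induction Q.exists_iterate_eq_root w using IsAncestor.induction with
  | self => exact isAncestor_self _
  | step w hw _ ih => exact isAncestor_of_isAncestor_parent (by simpa [hw] using ih)

lemma isAncestor_graft_inr_root_iff {x : V ⊕ W} :
    (P.graft Q).IsAncestor (.inr Q.root) x ↔ x.isLeft = false := by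
  rcases x with v | w
  · simpa using not_isAncestor_graft_inr_inl P Q Q.root v
  · simpa using isAncestor_graft_inr_root P Q w

variable {P Q}

lemma not_isAncestor_graft_inl_inr {c : V} (hc : P.IsRootChild c) (w : W) :
    ¬(P.graft Q).IsAncestor (.inl c) (.inr w) := fun h =>
  Sum.inl_ne_inr <| ((isRootChild_graft_inl P Q).2 hc).eq_of_isAncestor_of_isAncestor
    ((isRootChild_graft_inr P Q).2 rfl) h (isAncestor_graft_inr_root P Q w)

variable (P Q) in
/-- The grafted tree is the branch at its own root. -/
noncomputable def graftBranchInr : Q.Iso ((P.graft Q).branch (.inr Q.root)) where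
  toEquiv := Equiv.ofBijective (fun w => ⟨.inr w, isAncestor_graft_inr_root P Q w⟩)
    ⟨fun _ _ h => Sum.inr_injective (congrArg Subtype.val h), by
      rintro ⟨v | w, h⟩
      exacts [absurd h (not_isAncestor_graft_inr_inl P Q _ _), ⟨w, rfl⟩]⟩
  map_parent w := Subtype.ext <| by
    change Sum.inr (Q.parent w) = (((P.graft Q).branch (.inr Q.root)).parent ⟨.inr w, _⟩ : V ⊕ W)
    rw [coe_branch_parent]
    by_cases hw : w = Q.root <;> simp [hw, Q.parent_root]

variable (Q) in
/-- Grafting does not change the branches at the other children of the root. -/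
noncomputable def graftBranchInl {c : V} (hc : P.IsRootChild c) :
    (P.branch c).Iso ((P.graft Q).branch (.inl c)) where
  toEquiv := Equiv.ofBijective (fun v => ⟨.inl v, (isAncestor_graft_inl_inl P Q).2 v.2⟩)
    ⟨fun _ _ h => Subtype.ext (Sum.inl_injective (congrArg Subtype.val h)), by
      rintro ⟨v | w, h⟩
      exacts [⟨⟨v, (isAncestor_graft_inl_inl P Q).1 h⟩, rfl⟩,
        absurd h (not_isAncestor_graft_inl_inr hc w)]⟩
  map_parent v := Subtype.ext <| by
    change Sum.inl _ = (((P.graft Q).branch (.inl c)).parent ⟨.inl v, _⟩ : V ⊕ W)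
    rw [coe_branch_parent]
    by_cases hv : (v : V) = c <;> simp [hv, coe_branch_parent]

/-- Grafting respects isomorphisms. -/
def Iso.graft {P' : ParentTree V'} {Q' : ParentTree W'} (e : P.Iso P') (e' : Q.Iso Q') :
    (P.graft Q).Iso (P'.graft Q') where
  toEquiv := Equiv.sumCongr e.toEquiv e'.toEquiv
  map_parent := by
    rintro (v | w)
    · simp [e.map_parent]
    · by_cases hw : w = Q.root
      · simp [hw, e.map_root, e'.map_root]
      · simp [hw, e'.map_parent, ← e'.map_root]

variable (P Q) in
/-- The order in which two trees are grafted does not matter. -/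
def graftRightComm (R : ParentTree U) : ((R.graft P).graft Q).Iso ((R.graft Q).graft P) where
  toEquiv := (Equiv.sumAssoc U V W).trans <|
    (Equiv.sumCongr (.refl U) (.sumComm V W)).trans (Equiv.sumAssoc U W V).symm
  map_parent := by
    rintro ((u | v) | w)
    · simp
    · by_cases hv : v = P.root <;> simp [hv]
    · by_cases hw : w = Q.root <;> simp [hw]

/-- A tree is recovered from any branch at a child of the root and the rest. -/
noncomputable def restGraftBranch {c : V} (hc : P.IsRootChild c) :
    ((P.rest c hc.1).graft (P.branch c)).Iso P where
  toEquiv := (Equiv.sumComm _ _).trans (Equiv.sumCompl (P.IsAncestor c))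
  map_parent := by
    rintro (v | w)
    · rfl
    · by_cases hw : (w : V) = c
      · obtain rfl : w = (P.branch c).root := Subtype.ext hw
        simp [rest, branch, hc.2]
      · have hne : w ≠ (P.branch c).root := mt (congrArg Subtype.val) hw
        simp [hne, coe_branch_parent, hw]

end Graft

section Automorphisms

variable {V W V' W' : Type*} {P : ParentTree V} {Q : ParentTree W} {P' : ParentTree V'}
  {Q' : ParentTree W'}

lemma Iso.exists_eq_graft (e : (P.graft Q).Iso (P'.graft Q'))
    (he : e (.inr Q.root) = .inr Q'.root) :
    ∃ (e₁ : P.Iso P') (e₂ : Q.Iso Q'), e = e₁.graft e₂ := by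
  obtain ⟨e₁, e₂, hsum⟩ := exists_sumCongr_eq e.toEquiv fun x => by
    rw [Bool.eq_iff_iff, ← not_iff_not, Bool.not_eq_true, Bool.not_eq_true,
      ← isAncestor_graft_inr_root_iff P Q, ← isAncestor_graft_inr_root_iff P' Q', ← he,
      e.isAncestor_iff]
  have hroot : e₂ Q.root = Q'.root := by simpa [hsum] using he
  have hparent := e.map_parent
  refine ⟨⟨e₁, fun v => ?_⟩, ⟨e₂, fun w => ?_⟩, Iso.toEquiv_injective hsum⟩
  · simpa [hsum] using hparent (.inl v)
  · by_cases hw : w = Q.root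
    · rw [hw, Q.parent_root, hroot, Q'.parent_root]
    · simpa [hsum, hw, ← hroot] using hparent (.inr w)

lemma Iso.graft_injective : Function.Injective
    fun e : P.Iso P' × Q.Iso Q' => e.1.graft e.2 := by
  rintro ⟨e₁, e₂⟩ ⟨e₁', e₂'⟩ h
  have happ : ∀ x, e₁.graft e₂ x = e₁'.graft e₂' x := fun x => by rw [show e₁.graft e₂ = _ from h]
  exact Prod.ext (Iso.ext fun v => Sum.inl_injective (happ (.inl v)))
    (Iso.ext fun w => Sum.inr_injective (happ (.inr w)))

-- Split off the branch at `d` too and exchange it with `Q`.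
lemma exists_iso_graft_apply_eq_inl {d : V} (hd : P.IsRootChild d) (φ : Q.Iso (P.branch d)) :
    ∃ e : (P.graft Q).Iso (P.graft Q), e (.inr Q.root) = .inl d := by
  let split := (restGraftBranch hd).graft (Iso.refl Q)
  refine ⟨((split.symm.trans (graftRightComm _ _ _)).trans
    (((Iso.refl _).graft φ).graft φ.symm)).trans split, ?_⟩
  change split (.inl (.inr (φ Q.root))) = .inl d
  rw [φ.map_root]
  rfl

lemma exists_iso_graft_apply_eq {y : V ⊕ W} (hy : (P.graft Q).IsRootChild y)
    (φ : ((P.graft Q).branch y).Iso Q) :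
    ∃ e : (P.graft Q).Iso (P.graft Q), e (.inr Q.root) = y := by
  rcases y with d | w
  · have hd := (isRootChild_graft_inl P Q).1 hy
    exact exists_iso_graft_apply_eq_inl hd ((graftBranchInl Q hd).trans φ).symm
  · obtain rfl := (isRootChild_graft_inr P Q).1 hy
    exact ⟨Iso.refl _, rfl⟩

lemma Iso.isRootChild_apply_graft (e : (P.graft Q).Iso P') : P'.IsRootChild (e (.inr Q.root)) :=
  e.isRootChild_iff.2 ((isRootChild_graft_inr P Q).2 rfl)

lemma Iso.nonempty_of_graft (e : (P.graft Q).Iso (P'.graft Q')) (φ : Q.Iso Q') :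
    Nonempty (P.Iso P') := by
  obtain ⟨e', he'⟩ := exists_iso_graft_apply_eq e.isRootChild_apply_graft
    ((((graftBranchInr P Q).trans (e.branch _)).symm).trans φ)
  obtain ⟨e₁, -, -⟩ := (e.trans e'.symm).exists_eq_graft <| by
    change e'.toEquiv.symm (e (.inr Q.root)) = .inr Q'.root
    rw [Equiv.symm_apply_eq, ← he']
  exact ⟨e₁⟩

instance [Finite V] [Finite W] : Finite (P.Iso Q) :=
  Finite.of_injective Iso.toEquiv Iso.toEquiv_injective

variable (P Q) in
lemma card_iso_graft : Nat.card ((P.graft Q).Iso (P.graft Q)) =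
    Nat.card {y // (P.graft Q).IsRootChild y ∧ Nonempty (((P.graft Q).branch y).Iso Q)} *
      (Nat.card (P.Iso P) * Nat.card (Q.Iso Q)) := by
  choose move hmove using fun y : {y // (P.graft Q).IsRootChild y ∧
    Nonempty (((P.graft Q).branch y).Iso Q)} => exists_iso_graft_apply_eq y.2.1 y.2.2.some
  rw [← Nat.card_prod, ← Nat.card_prod]
  symm
  refine Nat.card_congr (.ofBijective (fun p => (p.2.1.graft p.2.2).trans (move p.1)) ⟨?_, ?_⟩)
  · rintro ⟨y, a⟩ ⟨y', a'⟩ h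
    have happ : ∀ x, move y (a.1.graft a.2 x) = move y' (a'.1.graft a'.2 x) := fun x =>
      congrArg (fun e : (P.graft Q).Iso (P.graft Q) => e x) h
    obtain rfl : y = y' := Subtype.ext <| by
      have := happ (.inr Q.root)
      change move y (.inr (a.2 Q.root)) = move y' (.inr (a'.2 Q.root)) at this
      rwa [a.2.map_root, a'.2.map_root, hmove, hmove] at this
    exact Prod.ext rfl (Iso.graft_injective (Iso.ext fun x => (move y).toEquiv.injective (happ x)))
  · intro e
    let y : {y // (P.graft Q).IsRootChild y ∧ Nonempty (((P.graft Q).branch y).Iso Q)} :=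
      ⟨e (.inr Q.root), e.isRootChild_apply_graft,
        ⟨((graftBranchInr P Q).trans (e.branch _)).symm⟩⟩
    obtain ⟨e₁, e₂, h⟩ := (e.trans (move y).symm).exists_eq_graft <| by
      change (move y).toEquiv.symm (e (.inr Q.root)) = .inr Q.root
      rw [Equiv.symm_apply_eq, hmove]
    exact ⟨(y, e₁, e₂), by simp only [← h]; ext x; simp⟩

/-- The tree structure on `V` transported along a bijection. -/
def comap (P : ParentTree W) (e : V ≃ W) : ParentTree V where
  parent v := e.symm (P.parent (e v))
  root := e.symm P.root
  parent_root := by simp [P.parent_root]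
  exists_iterate_eq_root v := by
    obtain ⟨k, hk⟩ := P.exists_iterate_eq_root (e v)
    refine ⟨k, e.injective ?_⟩
    rw [Function.Semiconj.iterate_right (f := e) (gb := P.parent) (fun _ => by simp) k v, hk,
      e.apply_symm_apply]

/-- The bijection along which the structure was transported is an isomorphism. -/
def comapIso (P : ParentTree W) (e : V ≃ W) : (P.comap e).Iso P := ⟨e, fun _ => by simp [comap]⟩

lemma Iso.eq_comap (e : P.Iso Q) : P = Q.comap e.toEquiv := by
  refine ParentTree.ext (funext fun v => ?_) ?_
  · exact e.eq_symm_apply.2 (e.map_parent v)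
  · exact e.eq_symm_apply.2 e.map_root

lemma card_labelings_mul_card_iso [Finite V] (e₀ : V ≃ W) (Q : ParentTree W) :
    Nat.card {P : ParentTree V // Nonempty (P.Iso Q)} * Nat.card (Q.Iso Q) =
      (Nat.card V).factorial := by
  let pick (P : {P : ParentTree V // Nonempty (P.Iso Q)}) := P.2.some
  rw [← Nat.card_prod, ← Nat.card_perm, ← Nat.card_congr (Equiv.equivCongr (.refl V) e₀).symm]
  refine Nat.card_congr (.ofBijective (fun p => ((pick p.1).trans p.2).toEquiv) ⟨?_, fun e => ?_⟩)
  · rintro ⟨P, a⟩ ⟨P', a'⟩ h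
    obtain rfl : P = P' := Subtype.ext <| by
      rw [((pick P).trans a).eq_comap, ((pick P').trans a').eq_comap]
      exact congrArg Q.comap h
    refine Prod.ext rfl (Iso.ext fun w => ?_)
    simpa using DFunLike.congr_fun h ((pick P).toEquiv.symm w)
  · let P : {P : ParentTree V // Nonempty (P.Iso Q)} := ⟨Q.comap e, ⟨Q.comapIso e⟩⟩
    exact ⟨(P, (pick P).symm.trans (Q.comapIso e)), Equiv.ext fun v => by simp [comapIso]⟩

end Automorphisms

end ParentTree

/-- A rooted tree on some finite vertex type. -/
structure FiniteTree where
  V : Type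
  [finite : Finite V]
  tree : ParentTree V

attribute [instance] FiniteTree.finite

instance FiniteTree.setoid : Setoid FiniteTree where
  r P Q := Nonempty (P.tree.Iso Q.tree)
  iseqv := ⟨fun P => ⟨.refl P.tree⟩, fun ⟨e⟩ => ⟨e.symm⟩, fun ⟨e⟩ ⟨f⟩ => ⟨e.trans f⟩⟩

/-- Isomorphism classes of finite rooted trees. -/
def TreeClass : Type 1 := Quotient FiniteTree.setoid

namespace TreeClass

section Invariants

variable {V W : Type} [Finite V] [Finite W]

/-- The isomorphism class of a tree. -/
def mk (P : ParentTree V) : TreeClass := ⟦⟨V, P⟩⟧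

lemma mk_eq_mk_iff {P : ParentTree V} {Q : ParentTree W} : mk P = mk Q ↔ Nonempty (P.Iso Q) :=
  Quotient.eq

@[elab_as_elim]
lemma ind {motive : TreeClass → Prop}
    (h : ∀ (V : Type) [Finite V] (P : ParentTree V), motive (mk P)) (τ : TreeClass) : motive τ :=
  Quotient.ind (fun P => h P.V P.tree) τ

/-- The number of vertices. -/
noncomputable def size : TreeClass → ℕ :=
  Quotient.lift (fun P => Nat.card P.V) fun _ _ ⟨e⟩ => Nat.card_congr e.toEquiv

@[simp] lemma size_mk (P : ParentTree V) : size (mk P) = Nat.card V := rfl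

/-- The number of automorphisms. -/
noncomputable def autCard : TreeClass → ℕ :=
  Quotient.lift (fun P => Nat.card (P.tree.Iso P.tree)) fun _ _ ⟨e⟩ => Nat.card_congr
    ⟨fun a => (e.symm.trans a).trans e, fun a => (e.trans a).trans e.symm,
      fun a => by ext; simp, fun a => by ext; simp⟩

@[simp] lemma autCard_mk (P : ParentTree V) : autCard (mk P) = Nat.card (P.Iso P) := rfl

/-- The number of branches at the root of the first tree that belong to the second class. -/
noncomputable def multiplicity : TreeClass → TreeClass → ℕ :=
  Quotient.lift (fun P σ => Nat.card {c // P.tree.IsRootChild c ∧ mk (P.tree.branch c) = σ})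
    fun _ _ ⟨e⟩ => funext fun σ => Nat.card_congr <| e.toEquiv.subtypeEquiv fun c => by
      rw [e.isRootChild_iff, mk_eq_mk_iff.2 ⟨e.branch c⟩]

lemma multiplicity_mk (P : ParentTree V) (σ : TreeClass) :
    multiplicity (mk P) σ = Nat.card {c // P.IsRootChild c ∧ mk (P.branch c) = σ} := rfl

/-- Adds a new branch of class `σ` at the root of `τ`. -/
noncomputable def attach : TreeClass → TreeClass → TreeClass :=
  Quotient.map₂ (fun P Q => ⟨_, P.tree.graft Q.tree⟩) fun _ _ ⟨e⟩ _ _ ⟨e'⟩ => ⟨e.graft e'⟩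

@[simp] lemma attach_mk (P : ParentTree V) (Q : ParentTree W) :
    attach (mk P) (mk Q) = mk (P.graft Q) := rfl

/-- The one-vertex tree. -/
def leaf : TreeClass := mk (V := Unit) ⟨id, (), rfl, fun _ => ⟨0, rfl⟩⟩

end Invariants

lemma size_pos (τ : TreeClass) : 0 < τ.size := by
  induction τ using ind with
  | h V P => exact have : Nonempty V := ⟨P.root⟩; Nat.card_pos

lemma autCard_pos (τ : TreeClass) : 0 < τ.autCard := by
  induction τ using ind with
  | h V P => exact have : Nonempty (P.Iso P) := ⟨.refl P⟩; Nat.card_pos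

lemma size_attach (τ σ : TreeClass) : (τ.attach σ).size = τ.size + σ.size := by
  induction τ using ind with
  | h V P =>
  induction σ using ind with
  | h W Q => simp

lemma attach_left_injective (σ : TreeClass) : Function.Injective (attach · σ) := by
  intro τ τ' h
  induction σ using ind with
  | h W Q =>
  induction τ using ind with
  | h V P =>
  induction τ' using ind with
  | h V' P' =>
    obtain ⟨e⟩ := mk_eq_mk_iff.1 h
    exact mk_eq_mk_iff.2 (e.nonempty_of_graft (.refl Q))

lemma mk_branch_graft_inl {V W : Type} [Finite V] [Finite W] {P : ParentTree V}
    (Q : ParentTree W) {c : V} (hc : P.IsRootChild c) :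
    mk ((P.graft Q).branch (.inl c)) = mk (P.branch c) :=
  mk_eq_mk_iff.2 ⟨(ParentTree.graftBranchInl Q hc).symm⟩

lemma mk_branch_graft_inr {V W : Type} [Finite V] [Finite W] (P : ParentTree V)
    (Q : ParentTree W) : mk ((P.graft Q).branch (.inr Q.root)) = mk Q :=
  mk_eq_mk_iff.2 ⟨(ParentTree.graftBranchInr P Q).symm⟩

lemma multiplicity_attach (τ σ υ : TreeClass) :
    (τ.attach σ).multiplicity υ = τ.multiplicity υ + if υ = σ then 1 else 0 := by
  induction τ using ind with
  | h V P =>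
  induction σ using ind with
  | h W Q =>
  rw [attach_mk, multiplicity_mk, Nat.card_congr Equiv.subtypeSum, Nat.card_sum, multiplicity_mk]
  congr 1
  · refine Nat.card_congr (Equiv.subtypeEquivRight fun c => ?_)
    rw [ParentTree.isRootChild_graft_inl, and_congr_right_iff]
    exact fun hc => by rw [mk_branch_graft_inl Q hc]
  · simp only [ParentTree.isRootChild_graft_inr]
    split_ifs with h
    · subst h
      have : Unique {w // w = Q.root ∧ mk ((P.graft Q).branch (.inr w)) = mk Q} :=
        ⟨⟨⟨Q.root, rfl, mk_branch_graft_inr P Q⟩⟩, fun w => Subtype.ext w.2.1⟩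
      exact Nat.card_unique
    · have : IsEmpty {w // w = Q.root ∧ mk ((P.graft Q).branch (.inr w)) = υ} :=
        ⟨fun ⟨_, rfl, hw⟩ => h (hw.symm.trans (mk_branch_graft_inr P Q))⟩
      exact Nat.card_of_isEmpty

lemma autCard_attach (τ σ : TreeClass) :
    (τ.attach σ).autCard = (τ.multiplicity σ + 1) * (τ.autCard * σ.autCard) := by
  have hmul := multiplicity_attach τ σ σ
  rw [if_pos rfl] at hmul
  rw [← hmul]
  clear hmul
  induction τ using ind with
  | h V P =>
  induction σ using ind with
  | h W Q =>
  simpa only [multiplicity_mk, attach_mk, autCard_mk, mk_eq_mk_iff] using P.card_iso_graft Q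

lemma exists_attach_eq_of_multiplicity_ne_zero {τ σ : TreeClass} (h : τ.multiplicity σ ≠ 0) :
    ∃ τ', attach τ' σ = τ := by
  induction τ using ind with
  | h V P =>
  obtain ⟨⟨c, hc, rfl⟩⟩ := (Nat.card_ne_zero.1 h).1
  exact ⟨mk (P.rest c hc.1), mk_eq_mk_iff.2 ⟨ParentTree.restGraftBranch hc⟩⟩

lemma size_lt_of_multiplicity_ne_zero {τ σ : TreeClass} (h : τ.multiplicity σ ≠ 0) :
    σ.size < τ.size := by
  obtain ⟨τ', rfl⟩ := exists_attach_eq_of_multiplicity_ne_zero h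
  rw [size_attach]
  exact Nat.lt_add_of_pos_left τ'.size_pos

lemma exists_multiplicity_ne_zero {τ : TreeClass} (hτ : τ ≠ leaf) :
    ∃ σ, τ.multiplicity σ ≠ 0 := by
  induction τ using ind with
  | h V P =>
  suffices ∃ c, P.IsRootChild c by
    obtain ⟨c, hc⟩ := this
    exact ⟨mk (P.branch c), Nat.card_ne_zero.2 ⟨⟨c, hc, rfl⟩, inferInstance⟩⟩
  by_contra! hno
  have heq : ∀ v, v = P.root := fun v => by
    induction P.exists_iterate_eq_root v using ParentTree.IsAncestor.induction with
    | self => rfl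
    | step v hv _ ih => exact absurd ⟨hv, ih⟩ (hno v)
  exact hτ <| mk_eq_mk_iff.2 ⟨⟨fun _ => (), fun _ => P.root, fun v => (heq v).symm, fun _ => rfl⟩,
    fun _ => rfl⟩

@[elab_as_elim]
lemma attach_induction {motive : TreeClass → Prop} (leaf : motive leaf)
    (attach : ∀ τ σ, motive τ → motive (attach τ σ)) (τ : TreeClass) : motive τ := by
  induction h : τ.size using Nat.strong_induction_on generalizing τ with
  | h n ih =>
  by_cases hτ : τ = TreeClass.leaf
  · exact hτ ▸ leaf
  obtain ⟨σ, hσ⟩ := exists_multiplicity_ne_zero hτ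
  obtain ⟨τ', rfl⟩ := exists_attach_eq_of_multiplicity_ne_zero hσ
  rw [size_attach] at h
  exact attach τ' σ (ih _ (h ▸ Nat.lt_add_of_pos_right σ.size_pos) τ' rfl)

@[simp] lemma size_leaf : leaf.size = 1 := Nat.card_unique

@[simp] lemma multiplicity_leaf (σ : TreeClass) : leaf.multiplicity σ = 0 := by
  by_contra h
  have := size_lt_of_multiplicity_ne_zero h
  have := σ.size_pos
  rw [size_leaf] at *
  omega

@[simp] lemma autCard_leaf : leaf.autCard = 1 :=
  (Nat.card_eq_one_iff_exists.2 ⟨.refl _, fun _ => ParentTree.Iso.ext fun _ => rfl⟩)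

lemma hasSum_multiplicity_mul_size (τ : TreeClass) :
    HasSum (fun σ => (τ.multiplicity σ : ℝ) * σ.size) (τ.size - 1) := by
  induction τ using attach_induction with
  | leaf => simp
  | attach τ σ ih =>
    convert! ih.add (hasSum_ite_eq σ (σ.size : ℝ)) using 1
    · ext υ
      rw [multiplicity_attach]
      split_ifs with h <;> simp [h, add_mul]
    · rw [size_attach]
      push_cast
      ring

lemma multiplicity_le_size (τ σ : TreeClass) : τ.multiplicity σ ≤ τ.size := by
  have hle : (τ.multiplicity σ : ℝ) * σ.size ≤ τ.size - 1 :=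
    le_hasSum τ.hasSum_multiplicity_mul_size σ fun _ _ => by positivity
  have hσ : (1 : ℝ) ≤ σ.size := mod_cast σ.size_pos
  exact_mod_cast (show (τ.multiplicity σ : ℝ) ≤ τ.size by nlinarith)

end TreeClass

section BranchSeries

open scoped Nat

variable {a : ℕ → ℝ}

lemma norm_ofReal_mul_pow_le_pow_div_factorial (ha : ∀ j, |a j| ≤ (j ! : ℝ)⁻¹) (j : ℕ) {z : ℂ}
    {r : ℝ} (hz : ‖z‖ ≤ r) : ‖(a j : ℂ) * z ^ j‖ ≤ r ^ j / j ! := by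
  rw [norm_mul, norm_pow, Complex.norm_real, Real.norm_eq_abs, div_eq_inv_mul]
  gcongr
  exact ha j

lemma hasSum_genFun_of_abs_le_inv_factorial (ha : ∀ j, |a j| ≤ (j ! : ℝ)⁻¹) (z : ℂ) :
    HasSum (fun j => (a j : ℂ) * z ^ j) (genFun a z) :=
  (Summable.of_norm_bounded (Real.summable_pow_div_factorial ‖z‖) fun j =>
    norm_ofReal_mul_pow_le_pow_div_factorial ha j le_rfl).hasSum

lemma differentiable_genFun_of_abs_le_inv_factorial (ha : ∀ j, |a j| ≤ (j ! : ℝ)⁻¹) :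
    Differentiable ℂ (genFun a) := fun z =>
  (Complex.differentiableOn_tsum_of_summable_norm
    (Real.summable_pow_div_factorial (‖z‖ + 1)) (fun j => by fun_prop) Metric.isOpen_ball
    fun j w hw => norm_ofReal_mul_pow_le_pow_div_factorial ha j
      (by simpa using (Metric.mem_ball.1 hw).le)).differentiableAt
    (Metric.isOpen_ball.mem_nhds (show z ∈ Metric.ball (0 : ℂ) (‖z‖ + 1) by simp))

lemma hasSum_pow_div_factorial_exp (x : ℝ) : HasSum (fun j : ℕ => x ^ j / j !) (Real.exp x) := by
  rw [Real.exp_eq_exp_ℝ]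
  exact NormedSpace.expSeries_div_hasSum_exp x

lemma norm_genFun_sub_le_exp_sub_one (ha : ∀ j, |a j| ≤ (j ! : ℝ)⁻¹) (z : ℂ) :
    ‖genFun a z - a 0‖ ≤ Real.exp ‖z‖ - 1 := by
  have hexp : HasSum (fun j : ℕ => ‖z‖ ^ (j + 1) / (j + 1)!) (Real.exp ‖z‖ - 1) := by
    simpa using (hasSum_nat_add_iff' 1).2 (hasSum_pow_div_factorial_exp ‖z‖)
  have htail : HasSum (fun j => (a (j + 1) : ℂ) * z ^ (j + 1)) (genFun a z - a 0) := by
    simpa using (hasSum_nat_add_iff' 1).2 (hasSum_genFun_of_abs_le_inv_factorial ha z)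
  exact htail.norm_le_of_bounded hexp fun j =>
    norm_ofReal_mul_pow_le_pow_div_factorial ha (j + 1) le_rfl

lemma hasSum_of_abs_le_inv_factorial (ha : ∀ j, |a j| ≤ (j ! : ℝ)⁻¹) (t : ℝ) :
    HasSum (fun j => a j * t ^ j) (genFun a t).re := by
  convert! Complex.hasSum_re (hasSum_genFun_of_abs_le_inv_factorial ha t) using 2 with j
  rw [← Complex.ofReal_pow, ← Complex.ofReal_mul, Complex.ofReal_re]

lemma genFun_ofReal (ha : ∀ j, |a j| ≤ (j ! : ℝ)⁻¹) (t : ℝ) :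
    genFun a t = (genFun a t).re := by
  refine (hasSum_genFun_of_abs_le_inv_factorial ha t).unique ?_
  exact_mod_cast hasSum_of_abs_le_inv_factorial ha t

variable (k : ℕ)

/-- The series `I(z) = ∑ zʲ / (j!)ᵏ`: the weighted choices of a multiset of branches from a single
class of weight `z`, where `j` equal branches contribute `(j!)ᵏ` to the denominator. -/
noncomputable def branchSeries : ℂ → ℂ := genFun fun j => (j ! : ℝ)⁻¹ ^ k

/-- The series `I' - I` for `I = branchSeries k`. -/
noncomputable def excessSeries : ℂ → ℂ :=
  genFun fun j => (j + 1) * ((j + 1)! : ℝ)⁻¹ ^ k - (j ! : ℝ)⁻¹ ^ k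

/-- The function `z I'(z) / I(z) - z` for `I = branchSeries k`: the expected number of branches of a
class of weight `z`, minus its first-order term. -/
noncomputable def excess (z : ℂ) : ℂ := z * excessSeries k z / branchSeries k z

variable {k} [NeZero k]

lemma inv_factorial_pow_le (j : ℕ) : (j ! : ℝ)⁻¹ ^ k ≤ (j ! : ℝ)⁻¹ :=
  pow_le_of_le_one (by positivity) (inv_le_one_of_one_le₀ (mod_cast j.factorial_pos))
    (NeZero.ne k)

lemma abs_branchSeries_coeff_le (j : ℕ) : |(j ! : ℝ)⁻¹ ^ k| ≤ (j ! : ℝ)⁻¹ := by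
  rw [abs_of_nonneg (by positivity)]
  exact inv_factorial_pow_le j

lemma succ_mul_inv_factorial_succ_pow_le (j : ℕ) :
    ((j : ℝ) + 1) * ((j + 1)! : ℝ)⁻¹ ^ k ≤ (j ! : ℝ)⁻¹ ^ k := by
  have hle : ((j : ℝ) + 1)⁻¹ ^ k ≤ ((j : ℝ) + 1)⁻¹ := pow_le_of_le_one (by positivity)
    (inv_le_one_of_one_le₀ (by linarith [j.cast_nonneg (α := ℝ)])) (NeZero.ne k)
  calc ((j : ℝ) + 1) * ((j + 1)! : ℝ)⁻¹ ^ k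
      = ((j : ℝ) + 1) * ((j : ℝ) + 1)⁻¹ ^ k * (j ! : ℝ)⁻¹ ^ k := by
        rw [Nat.factorial_succ]; push_cast; rw [mul_inv, mul_pow, mul_assoc]
    _ ≤ ((j : ℝ) + 1) * ((j : ℝ) + 1)⁻¹ * (j ! : ℝ)⁻¹ ^ k := by gcongr
    _ = (j ! : ℝ)⁻¹ ^ k := by rw [mul_inv_cancel₀ (by positivity), one_mul]

lemma abs_excessSeries_coeff_le (j : ℕ) :
    |(j + 1) * ((j + 1)! : ℝ)⁻¹ ^ k - (j ! : ℝ)⁻¹ ^ k| ≤ (j ! : ℝ)⁻¹ := by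
  have hnonneg : 0 ≤ ((j : ℝ) + 1) * ((j + 1)! : ℝ)⁻¹ ^ k := by positivity
  rw [abs_of_nonpos (by linarith [succ_mul_inv_factorial_succ_pow_le (k := k) j])]
  linarith [inv_factorial_pow_le (k := k) j]

lemma exp_two_thirds_le : Real.exp (2 / 3) ≤ 1.95 := by
  refine le_of_pow_le_pow_left₀ three_ne_zero (by norm_num) ?_
  calc Real.exp (2 / 3) ^ 3 = Real.exp 1 ^ 2 := by simp only [← Real.exp_nat_mul]; norm_num
    _ ≤ 2.7183 ^ 2 := by gcongr; linarith [Real.exp_one_lt_d9]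
    _ ≤ 1.95 ^ 3 := by norm_num

lemma le_norm_branchSeries {z : ℂ} (hz : ‖z‖ ≤ 2 / 3) : 1 / 20 ≤ ‖branchSeries k z‖ := by
  have hsub : ‖branchSeries k z - 1‖ ≤ Real.exp ‖z‖ - 1 := by
    simpa [branchSeries] using norm_genFun_sub_le_exp_sub_one (abs_branchSeries_coeff_le (k := k)) z
  have hexp : Real.exp ‖z‖ ≤ 1.95 := (Real.exp_le_exp.2 hz).trans exp_two_thirds_le
  have := norm_sub_norm_le 1 (branchSeries k z)
  rw [norm_sub_rev, norm_one] at this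
  linarith

lemma branchSeries_ne_zero {z : ℂ} (hz : ‖z‖ ≤ 2 / 3) : branchSeries k z ≠ 0 :=
  norm_pos_iff.1 (lt_of_lt_of_le (by norm_num) (le_norm_branchSeries hz))

lemma norm_excess_le {z : ℂ} (hz : ‖z‖ ≤ 2 / 3) : ‖excess k z‖ ≤ 40 * ‖z‖ ^ 2 := by
  have hE : ‖excessSeries k z‖ ≤ 2 * ‖z‖ := calc
    ‖excessSeries k z‖ ≤ Real.exp ‖z‖ - 1 := by
      simpa [excessSeries] using
        norm_genFun_sub_le_exp_sub_one (abs_excessSeries_coeff_le (k := k)) z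
    _ ≤ 2 * ‖z‖ := by
      simpa using (le_abs_self _).trans
        (Real.abs_exp_sub_one_le (x := ‖z‖) (by rw [abs_norm]; linarith))
  rw [excess, norm_div, norm_mul]
  calc ‖z‖ * ‖excessSeries k z‖ / ‖branchSeries k z‖ ≤ ‖z‖ * (2 * ‖z‖) / (1 / 20) := by
        gcongr
        exact le_norm_branchSeries hz
    _ = 40 * ‖z‖ ^ 2 := by ring

lemma differentiableAt_excess {z : ℂ} (hz : ‖z‖ ≤ 2 / 3) : DifferentiableAt ℂ (excess k) z :=
  (differentiableAt_id.mul
    (differentiable_genFun_of_abs_le_inv_factorial abs_excessSeries_coeff_le z)).fun_div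
    (differentiable_genFun_of_abs_le_inv_factorial abs_branchSeries_coeff_le z)
    (branchSeries_ne_zero hz)

lemma one_le_re_branchSeries {t : ℝ} (ht : 0 ≤ t) : 1 ≤ (branchSeries k t).re := by
  simpa [branchSeries] using
    le_hasSum (hasSum_of_abs_le_inv_factorial (abs_branchSeries_coeff_le (k := k)) t) 0
      fun j _ => by positivity

lemma re_branchSeries_le_exp {t : ℝ} (ht : 0 ≤ t) : (branchSeries k t).re ≤ Real.exp t := by
  refine hasSum_le (fun j => ?_)
    (hasSum_of_abs_le_inv_factorial (abs_branchSeries_coeff_le (k := k)) t)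
    (hasSum_pow_div_factorial_exp t)
  rw [div_eq_inv_mul]
  gcongr
  exact inv_factorial_pow_le j

lemma one_sub_re_branchSeries_le {t : ℝ} (ht : 0 ≤ t) :
    1 - (branchSeries k t).re ≤ (excessSeries k t).re := by
  have hsum := (hasSum_of_abs_le_inv_factorial (abs_excessSeries_coeff_le (k := k)) t).add
    (hasSum_of_abs_le_inv_factorial (abs_branchSeries_coeff_le (k := k)) t)
  have hle := le_hasSum hsum 0 fun j _ => by
    rw [← add_mul, sub_add_cancel]
    positivity
  rw [sub_le_iff_le_add]
  simpa [branchSeries, excessSeries] using hle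

lemma exists_excess_ofReal_eq {t : ℝ} (ht : 0 ≤ t) : ∃ r : ℝ, excess k t = r ∧ -t ^ 2 ≤ r := by
  set I := (branchSeries k t).re
  set E := (excessSeries k t).re
  refine ⟨t * E / I, ?_, ?_⟩
  · rw [excess, branchSeries, excessSeries, genFun_ofReal abs_branchSeries_coeff_le,
      genFun_ofReal abs_excessSeries_coeff_le]
    push_cast
    rfl
  have hI₁ : 1 ≤ I := one_le_re_branchSeries ht
  have hI₀ : 0 < I := by linarith
  have hlog : 1 - I⁻¹ ≤ t := (Real.one_sub_inv_le_log_of_pos hI₀).trans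
    ((Real.log_le_iff_le_exp hI₀).2 (re_branchSeries_le_exp ht))
  have hle : I - 1 ≤ t * I := by
    simpa [sub_mul, hI₀.ne'] using mul_le_mul_of_nonneg_right hlog hI₀.le
  rw [le_div_iff₀ hI₀]
  nlinarith [one_sub_re_branchSeries_le (k := k) ht]

end BranchSeries

namespace TreeClass

section Weights

variable {𝕜 : Type*} [Field 𝕜]

/-- The contribution `xⁿ / aᵏ` of a class with `n` vertices and `a` automorphisms to the generating
function. For `k = 1` the coefficient is, up to `n!`, the number of labeled trees in the class; for
`k = 2` it is, up to `n!²`, the number of pairs of such trees. -/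
noncomputable def term (k : ℕ) (x : 𝕜) (τ : TreeClass) : 𝕜 := (τ.autCard : 𝕜)⁻¹ ^ k * x ^ τ.size

@[simp] lemma term_leaf (k : ℕ) (x : 𝕜) : leaf.term k x = x := by simp [term]

lemma term_attach [CharZero 𝕜] (k : ℕ) (x : 𝕜) (τ σ : TreeClass) :
    (τ.attach σ).term k x * (τ.multiplicity σ + 1) ^ k = τ.term k x * σ.term k x := by
  have hm : (τ.multiplicity σ + 1 : 𝕜) ≠ 0 := by
    exact_mod_cast Nat.succ_ne_zero (τ.multiplicity σ)
  simp only [term, autCard_attach, size_attach, pow_add, Nat.cast_mul, Nat.cast_add, Nat.cast_one,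
    mul_inv, mul_pow, inv_pow (_ + 1 : 𝕜)]
  field_simp

lemma term_mul (k : ℕ) (c x : 𝕜) (τ : TreeClass) : τ.term k (c * x) = τ.term k x * c ^ τ.size := by
  rw [term, term, mul_pow, mul_assoc, mul_comm (x ^ _)]

lemma term_nonneg (k : ℕ) {x : ℝ} (hx : 0 ≤ x) (τ : TreeClass) : 0 ≤ τ.term k x := by
  unfold term
  positivity

lemma term_le_pow (k : ℕ) {x : ℝ} (hx : 0 ≤ x) (τ : TreeClass) : τ.term k x ≤ x ^ τ.size :=
  mul_le_of_le_one_left (by positivity) <| pow_le_one₀ (by positivity) <|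
    inv_le_one_of_one_le₀ (mod_cast τ.autCard_pos)

lemma term_le_term (k : ℕ) {x y : ℝ} (hx : 0 ≤ x) (hxy : x ≤ y) (τ : TreeClass) :
    τ.term k x ≤ τ.term k y := by
  unfold term
  gcongr

lemma norm_term (k : ℕ) (z : ℂ) (τ : TreeClass) : ‖τ.term k z‖ = τ.term k ‖z‖ := by
  simp [term]

lemma ofReal_term (k : ℕ) (x : ℝ) (τ : TreeClass) : ((τ.term k x : ℝ) : ℂ) = τ.term k (x : ℂ) := by
  simp [term]

end Weights

section PartialSums

lemma exists_mk_eq {τ : TreeClass} {n : ℕ} (h : τ.size = n) :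
    ∃ P : ParentTree (Fin n), mk P = τ := by
  induction τ using ind with
  | h V Q =>
  let e : Fin n ≃ V := (Finite.equivFinOfCardEq h).symm
  exact ⟨Q.comap e, mk_eq_mk_iff.2 ⟨Q.comapIso e⟩⟩

instance (V : Type*) [Finite V] : Finite (ParentTree V) :=
  Finite.of_injective (fun P => (P.parent, P.root)) fun _ _ h =>
    ParentTree.ext (congrArg Prod.fst h) (congrArg Prod.snd h)

lemma finite_setOf_size_le (N : ℕ) : {τ : TreeClass | τ.size ≤ N}.Finite := by
  refine (Set.Finite.biUnion (Set.finite_Iic N) fun n _ =>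
    Set.finite_range (mk : ParentTree (Fin n) → TreeClass)).subset fun τ hτ => ?_
  exact Set.mem_biUnion hτ (exists_mk_eq rfl)

/-- The classes with at most `N` vertices. -/
noncomputable def sizeLE (N : ℕ) : Finset TreeClass := (finite_setOf_size_le N).toFinset

@[simp] lemma mem_sizeLE {N : ℕ} {τ : TreeClass} : τ ∈ sizeLE N ↔ τ.size ≤ N := by simp [sizeLE]

/-- The generating function restricted to the classes with at most `N` vertices. -/
noncomputable def partialSum (k N : ℕ) (x : ℝ) : ℝ := ∑ τ ∈ sizeLE N, τ.term k x

/-- The Euler derivative `x F'(x)` of `F = partialSum k N`. -/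
noncomputable def eulerPartialSum (k N : ℕ) (x : ℝ) : ℝ := ∑ τ ∈ sizeLE N, τ.size * τ.term k x

variable (k N : ℕ) {x : ℝ}

lemma eulerPartialSum_eq (x : ℝ) : eulerPartialSum k N x = partialSum k N x +
    ∑ σ ∈ sizeLE N, σ.size * ∑ τ ∈ sizeLE N, τ.multiplicity σ * τ.term k x := by
  have hsize : ∀ τ ∈ sizeLE N,
      (τ.size : ℝ) = 1 + ∑ σ ∈ sizeLE N, (τ.multiplicity σ : ℝ) * σ.size := fun τ hτ => by
    rw [← sub_eq_iff_eq_add']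
    refine τ.hasSum_multiplicity_mul_size.unique (hasSum_sum_of_ne_finset_zero fun σ hσ => ?_)
    rw [mem_sizeLE] at hτ hσ
    by_contra hne
    exact hσ ((size_lt_of_multiplicity_ne_zero
      (Nat.cast_ne_zero.1 (left_ne_zero_of_mul hne))).le.trans hτ)
  rw [eulerPartialSum, partialSum, Finset.sum_congr rfl fun τ hτ => by rw [hsize τ hτ]]
  simp only [add_mul, one_mul, Finset.sum_add_distrib, Finset.sum_mul, Finset.mul_sum]
  rw [Finset.sum_comm]
  exact congrArg _ (Finset.sum_congr rfl fun σ _ => Finset.sum_congr rfl fun τ _ => by ring)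

lemma sum_multiplicity_mul_term_le [NeZero k] (hx : 0 ≤ x) (σ : TreeClass) :
    ∑ τ ∈ sizeLE N, τ.multiplicity σ * τ.term k x ≤ partialSum k N x * σ.term k x := by
  calc ∑ τ ∈ sizeLE N, τ.multiplicity σ * τ.term k x
      = ∑ τ ∈ sizeLE N with τ.multiplicity σ ≠ 0, τ.multiplicity σ * τ.term k x := by
        refine (Finset.sum_filter_of_ne fun τ _ h => ?_).symm
        exact Nat.cast_ne_zero.1 (left_ne_zero_of_mul h)
    _ ≤ ∑ τ ∈ (sizeLE N).image (attach · σ), τ.multiplicity σ * τ.term k x := by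
        refine Finset.sum_le_sum_of_subset_of_nonneg (fun τ hτ => ?_) fun τ _ _ =>
          mul_nonneg (Nat.cast_nonneg _) (τ.term_nonneg k hx)
        obtain ⟨hN, hne⟩ := Finset.mem_filter.1 hτ
        obtain ⟨τ', rfl⟩ := exists_attach_eq_of_multiplicity_ne_zero hne
        rw [mem_sizeLE, size_attach] at hN
        exact Finset.mem_image_of_mem _ (mem_sizeLE.2 (by omega))
    _ = ∑ τ ∈ sizeLE N, (τ.multiplicity σ + 1) * (τ.attach σ).term k x := by
        rw [Finset.sum_image fun _ _ _ _ h => attach_left_injective σ h]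
        simp [multiplicity_attach]
    _ ≤ ∑ τ ∈ sizeLE N, τ.term k x * σ.term k x := by
        refine Finset.sum_le_sum fun τ _ => ?_
        rw [← term_attach, mul_comm]
        have := (τ.attach σ).term_nonneg k hx
        gcongr
        exact le_self_pow₀ (by linarith [(τ.multiplicity σ).cast_nonneg (α := ℝ)]) (NeZero.ne k)
    _ = partialSum k N x * σ.term k x := (Finset.sum_mul _ _ _).symm

lemma eulerPartialSum_mul_one_sub_le [NeZero k] (hx : 0 ≤ x) :
    eulerPartialSum k N x * (1 - partialSum k N x) ≤ partialSum k N x := by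
  have hle : ∑ σ ∈ sizeLE N, σ.size * ∑ τ ∈ sizeLE N, τ.multiplicity σ * τ.term k x ≤
      ∑ σ ∈ sizeLE N, σ.size * (partialSum k N x * σ.term k x) := by
    gcongr with σ _
    exact sum_multiplicity_mul_term_le k N hx σ
  have hprod : ∑ σ ∈ sizeLE N, σ.size * (partialSum k N x * σ.term k x) =
      partialSum k N x * eulerPartialSum k N x := by
    rw [eulerPartialSum, Finset.mul_sum]
    exact Finset.sum_congr rfl fun σ _ => by ring
  linarith [eulerPartialSum_eq k N x]

lemma partialSum_nonneg (hx : 0 ≤ x) : 0 ≤ partialSum k N x :=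
  Finset.sum_nonneg fun τ _ => τ.term_nonneg k hx

lemma continuous_partialSum : Continuous (partialSum k N) := by
  unfold partialSum term
  fun_prop

/-- The polynomial `F(x) / x` for `F = partialSum k N`, which is defined at `0` because every class
has at least one vertex. -/
noncomputable def divPartialSum (x : ℝ) : ℝ :=
  ∑ τ ∈ sizeLE N, (τ.autCard : ℝ)⁻¹ ^ k * x ^ (τ.size - 1)

lemma mul_divPartialSum (x : ℝ) : x * divPartialSum k N x = partialSum k N x := by
  rw [divPartialSum, partialSum, Finset.mul_sum]
  refine Finset.sum_congr rfl fun τ _ => ?_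
  rw [term, mul_left_comm, mul_pow_sub_one τ.size_pos.ne']

lemma eq_leaf_of_size_eq_one {τ : TreeClass} (h : τ.size = 1) : τ = leaf := by
  by_contra hτ
  obtain ⟨σ, hσ⟩ := exists_multiplicity_ne_zero hτ
  have := size_lt_of_multiplicity_ne_zero hσ
  have := σ.size_pos
  omega

lemma divPartialSum_zero_le : divPartialSum k N 0 ≤ 1 := by
  have hzero : ∀ τ : TreeClass, (τ.autCard : ℝ)⁻¹ ^ k * 0 ^ (τ.size - 1) =
      if τ = leaf then 1 else 0 := fun τ => by
    split_ifs with h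
    · simp [h]
    · have : τ.size ≠ 1 := mt eq_leaf_of_size_eq_one h
      have := τ.size_pos
      rw [zero_pow (by omega), mul_zero]
  rw [divPartialSum, Finset.sum_congr rfl fun τ _ => hzero τ, Finset.sum_ite_eq']
  split_ifs <;> norm_num

lemma hasDerivAt_partialSum (hx : x ≠ 0) :
    HasDerivAt (partialSum k N) (eulerPartialSum k N x / x) x := by
  have hsum : HasDerivAt (partialSum k N)
      (∑ τ ∈ sizeLE N, (τ.autCard : ℝ)⁻¹ ^ k * (τ.size * x ^ (τ.size - 1))) x :=
    HasDerivAt.fun_sum fun τ _ => (hasDerivAt_pow _ x).const_mul _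
  convert! hsum using 1
  rw [eulerPartialSum, Finset.sum_div]
  refine Finset.sum_congr rfl fun τ _ => ?_
  rw [term, ← mul_pow_sub_one τ.size_pos.ne' x]
  field_simp

lemma antitoneOn_divPartialSum_mul_exp [NeZero k] :
    AntitoneOn (fun x => divPartialSum k N x * Real.exp (-partialSum k N x)) (Set.Ici 0) := by
  refine antitoneOn_of_hasDerivWithinAt_nonpos (f' := fun x =>
    (eulerPartialSum k N x * (1 - partialSum k N x) - partialSum k N x) *
      Real.exp (-partialSum k N x) / x ^ 2) (convex_Ici 0) ?_ (fun x hx => ?_) fun x hx => ?_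
  · unfold divPartialSum
    exact (Continuous.mul (by fun_prop) (continuous_partialSum k N).neg.rexp).continuousOn
  all_goals rw [interior_Ici, Set.mem_Ioi] at hx
  · have hF := hasDerivAt_partialSum k N hx.ne'
    have hquot := (hF.div (hasDerivAt_id x) hx.ne').mul hF.neg.exp
    refine (hquot.congr_deriv (by simp; field_simp; ring)).congr_of_eventuallyEq ?_
      |>.hasDerivWithinAt
    filter_upwards [eventually_ne_nhds hx.ne'] with y hy
    simp [← mul_divPartialSum k N y, hy]
  · have := eulerPartialSum_mul_one_sub_le k N hx.le
    exact div_nonpos_of_nonpos_of_nonneg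
      (mul_nonpos_of_nonpos_of_nonneg (by linarith) (Real.exp_pos _).le) (by positivity)

-- If `F` reached `1` it would do so at some `x ≥ a`, where `F exp(-F) = exp(-1)`.
lemma partialSum_le_one [NeZero k] {a b : ℝ} (ha : 0 ≤ a) (hab : a ≤ b)
    (hFa : partialSum k N a ≤ 1)
    (hb : b * (divPartialSum k N a * Real.exp (-partialSum k N a)) < Real.exp (-1)) :
    partialSum k N b ≤ 1 := by
  by_contra! hFb
  obtain ⟨x, ⟨hax, hxb⟩, hFx⟩ :=
    intermediate_value_Icc hab (continuous_partialSum k N).continuousOn ⟨hFa, hFb.le⟩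
  have hx : 0 ≤ x := ha.trans hax
  have hD : 0 ≤ divPartialSum k N a := Finset.sum_nonneg fun τ _ => by positivity
  refine hb.not_ge ?_
  calc Real.exp (-1) = partialSum k N x * Real.exp (-partialSum k N x) := by rw [hFx, one_mul]
    _ = x * (divPartialSum k N x * Real.exp (-partialSum k N x)) := by
      rw [← mul_assoc, mul_divPartialSum]
    _ ≤ x * (divPartialSum k N a * Real.exp (-partialSum k N a)) :=
      mul_le_mul_of_nonneg_left (antitoneOn_divPartialSum_mul_exp k N ha hx hax) hx
    _ ≤ b * (divPartialSum k N a * Real.exp (-partialSum k N a)) := by gcongr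

end PartialSums

section Radius

variable (k : ℕ)

/-- The points at which all partial sums of the generating function are at most `1`. -/
def subcriticalSet : Set ℝ := {x | 0 ≤ x ∧ ∀ N, partialSum k N x ≤ 1}

lemma isClosed_subcriticalSet : IsClosed (subcriticalSet k) := by
  have heq : subcriticalSet k = Set.Ici 0 ∩ ⋂ N, {x | partialSum k N x ≤ 1} := by
    ext; simp [subcriticalSet]
  rw [heq]
  exact isClosed_Ici.inter
    (isClosed_iInter fun N => isClosed_le (continuous_partialSum k N) continuous_const)

lemma exists_pos_mem_subcriticalSet [NeZero k] : ∃ x ∈ subcriticalSet k, 0 < x := by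
  have hpos : 0 < Real.exp (-1) := Real.exp_pos _
  refine ⟨Real.exp (-1) / 2, ⟨by positivity, fun N => ?_⟩, by positivity⟩
  have hF₀ : partialSum k N 0 = 0 := by rw [← mul_divPartialSum, zero_mul]
  refine partialSum_le_one k N le_rfl (by positivity) (by rw [hF₀]; exact zero_le_one) ?_
  rw [hF₀, neg_zero, Real.exp_zero, mul_one]
  nlinarith [divPartialSum_zero_le k N]

-- The classes with one and two vertices have only the trivial automorphism, so `x + x² ≤ 1`.
lemma le_of_mem_subcriticalSet {x : ℝ} (hx : x ∈ subcriticalSet k) : x ≤ 5 / 8 := by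
  have hedge : (leaf.attach leaf).term k x = x ^ 2 := by
    have := term_attach k x leaf leaf
    simpa [pow_two] using this
  have hne : leaf ≠ leaf.attach leaf := fun h => by
    simpa [size_attach] using congrArg size h
  have hle : ∑ τ ∈ {leaf, leaf.attach leaf}, τ.term k x ≤ partialSum k 2 x :=
    Finset.sum_le_sum_of_subset_of_nonneg (by
      intro τ hτ
      rcases Finset.mem_insert.1 hτ with rfl | hτ
      · simp
      · simp [Finset.mem_singleton.1 hτ, size_attach]) fun τ _ _ => τ.term_nonneg k hx.1
  rw [Finset.sum_pair hne, hedge, term_leaf] at hle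
  by_contra! hgt
  nlinarith [hx.2 2]

lemma sum_term_le_partialSum {x : ℝ} (hx : 0 ≤ x) (s : Finset TreeClass) :
    ∑ τ ∈ s, τ.term k x ≤ partialSum k (s.sup size) x :=
  Finset.sum_le_sum_of_subset_of_nonneg (fun _ hτ => mem_sizeLE.2 (Finset.le_sup hτ))
    fun τ _ _ => τ.term_nonneg k hx

variable {k}

lemma summable_term {x : ℝ} (hx : x ∈ subcriticalSet k) : Summable (term k x) :=
  summable_of_sum_le (term_nonneg k hx.1) fun s =>
    (sum_term_le_partialSum k hx.1 s).trans (hx.2 _)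

lemma mul_exp_neg_le_mul_exp_neg {p q : ℝ} (hp : 0 ≤ p) (hpq : p ≤ q) (hq : q ≤ 1) :
    p * Real.exp (-p) ≤ q * Real.exp (-q) := by
  have hexp : Real.exp (-q) = Real.exp (p - q) * Real.exp (-p) := by rw [← Real.exp_add]; ring_nf
  rw [hexp, ← mul_assoc]
  gcongr
  nlinarith [Real.add_one_le_exp (p - q)]

lemma exists_gt_mem_subcriticalSet [NeZero k] {a : ℝ} (ha : a ∈ subcriticalSet k) (ha₀ : 0 < a)
    (hlt : ∑' τ, term k a τ < 1) : ∃ b ∈ subcriticalSet k, a < b := by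
  set q := ∑' τ, term k a τ
  have hq : q * Real.exp (-q) < Real.exp (-1) := by
    rw [← lt_div_iff₀ (Real.exp_pos _), ← Real.exp_sub]
    simpa [neg_add_eq_sub] using Real.add_one_lt_exp (x := q - 1) (by linarith)
  obtain ⟨b, hb, hab⟩ : ∃ b, b * (q * Real.exp (-q) / a) < Real.exp (-1) ∧ a < b := by
    have hcont : Filter.Tendsto (fun b => b * (q * Real.exp (-q) / a)) (nhdsWithin a (Set.Ioi a))
        (nhds (q * Real.exp (-q))) := by
      have : Continuous fun b => b * (q * Real.exp (-q) / a) := by fun_prop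
      simpa [mul_div_cancel₀ _ ha₀.ne'] using (this.tendsto a).mono_left nhdsWithin_le_nhds
    exact ((hcont.eventually_lt_const hq).and self_mem_nhdsWithin).exists
  refine ⟨b, ⟨by linarith, fun N => partialSum_le_one k N ha₀.le hab.le (ha.2 N) ?_⟩, hab⟩
  have hFq : partialSum k N a ≤ q :=
    (summable_term ha).sum_le_tsum _ fun τ _ => τ.term_nonneg k ha₀.le
  refine (mul_le_mul_of_nonneg_left ?_ (by linarith)).trans_lt hb
  rw [le_div_iff₀' ha₀, ← mul_assoc, mul_divPartialSum]
  exact mul_exp_neg_le_mul_exp_neg (partialSum_nonneg k N ha₀.le) hFq hlt.le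

variable (k) in
lemma exists_hasSum_term_eq_one [NeZero k] : ∃ ρ : ℝ, 0 < ρ ∧ ρ ≤ 5 / 8 ∧ HasSum (term k ρ) 1 := by
  obtain ⟨x, hx, hx₀⟩ := exists_pos_mem_subcriticalSet k
  have hbdd : BddAbove (subcriticalSet k) := ⟨5 / 8, fun _ => le_of_mem_subcriticalSet k⟩
  set ρ := sSup (subcriticalSet k)
  have hρ : ρ ∈ subcriticalSet k := (isClosed_subcriticalSet k).csSup_mem ⟨x, hx⟩ hbdd
  have hρ₀ : 0 < ρ := hx₀.trans_le (le_csSup hbdd hx)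
  have hle : ∑' τ, term k ρ τ ≤ 1 := (summable_term hρ).tsum_le_of_sum_le fun s =>
    (sum_term_le_partialSum k hρ.1 s).trans (hρ.2 _)
  refine ⟨ρ, hρ₀, le_of_mem_subcriticalSet k hρ, ?_⟩
  rcases hle.lt_or_eq with hlt | heq
  · obtain ⟨b, hb, hρb⟩ := exists_gt_mem_subcriticalSet hρ hρ₀ hlt
    exact absurd (le_csSup hbdd hb) hρb.not_ge
  · exact heq ▸ (summable_term hρ).hasSum

end Radius

section FunctionalEquation

open scoped Nat

variable (k : ℕ) (z : ℂ)

/-- The part of the generating function coming from the classes with exactly `j` branches of class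
`σ`. -/
noncomputable def multiplicitySum (σ : TreeClass) (j : ℕ) : ℂ :=
  ∑' τ : {τ : TreeClass // τ.multiplicity σ = j}, τ.1.term k z

lemma multiplicitySum_succ_mul (σ : TreeClass) (j : ℕ) :
    multiplicitySum k z σ (j + 1) * (j + 1) ^ k = multiplicitySum k z σ j * σ.term k z := by
  let attachEquiv : {τ : TreeClass // τ.multiplicity σ = j} ≃
      {τ : TreeClass // τ.multiplicity σ = j + 1} :=
    Equiv.ofBijective (fun τ => ⟨τ.1.attach σ, by simp [multiplicity_attach, τ.2]⟩)
      ⟨fun τ τ' h => Subtype.ext (attach_left_injective σ (congrArg Subtype.val h)), fun τ => by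
        obtain ⟨τ', hτ'⟩ := exists_attach_eq_of_multiplicity_ne_zero (τ := τ.1) (σ := σ) (by
          rw [τ.2]; exact j.succ_ne_zero)
        have hmult : τ'.multiplicity σ = j := by
          simpa [← hτ', multiplicity_attach] using τ.2
        exact ⟨⟨τ', hmult⟩, Subtype.ext hτ'⟩⟩
  rw [multiplicitySum, ← attachEquiv.tsum_eq, multiplicitySum, ← tsum_mul_right, ← tsum_mul_right]
  refine tsum_congr fun τ => ?_
  rw [← term_attach, τ.2]
  rfl

lemma multiplicitySum_eq (σ : TreeClass) (j : ℕ) : multiplicitySum k z σ j =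
    multiplicitySum k z σ 0 * (((j ! : ℝ)⁻¹ ^ k : ℝ) * σ.term k z ^ j) := by
  induction j with
  | zero => simp
  | succ j ih =>
    have hj : (j + 1 : ℂ) ^ k ≠ 0 := pow_ne_zero _ (mod_cast j.succ_ne_zero)
    have hj! : (j ! : ℂ) ≠ 0 := mod_cast j.factorial_ne_zero
    rw [← mul_left_inj' hj, multiplicitySum_succ_mul, ih, Nat.factorial_succ, pow_succ]
    push_cast
    rw [mul_inv, mul_pow, inv_pow (j + 1 : ℂ)]
    field_simp

variable {k z}

lemma hasSum_fiberwise_multiplicity {g : TreeClass → ℂ} (hg : Summable g) (σ : TreeClass) :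
    HasSum (fun j => ∑' τ : {τ : TreeClass // τ.multiplicity σ = j}, g τ) (∑' τ, g τ) :=
  hg.hasSum.tsum_fiberwise (multiplicity · σ)

lemma tsum_term_eq_mul_branchSeries [NeZero k] (hz : Summable (term k z)) (σ : TreeClass) :
    ∑' τ, term k z τ = multiplicitySum k z σ 0 * branchSeries k (σ.term k z) := by
  refine (hasSum_fiberwise_multiplicity hz σ).unique ?_
  refine ((hasSum_genFun_of_abs_le_inv_factorial abs_branchSeries_coeff_le _).mul_left _).congr_fun
    fun j => ?_
  exact multiplicitySum_eq k z σ j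

lemma hasSum_nat_mul_branchSeries_coeff [NeZero k] (w : ℂ) :
    HasSum (fun j : ℕ => (j : ℂ) * (((j ! : ℝ)⁻¹ ^ k : ℝ) * w ^ j))
      (w * (branchSeries k w + excessSeries k w)) := by
  rw [← hasSum_nat_add_iff' 1]
  have hI := hasSum_genFun_of_abs_le_inv_factorial (abs_branchSeries_coeff_le (k := k)) w
  have hE := hasSum_genFun_of_abs_le_inv_factorial (abs_excessSeries_coeff_le (k := k)) w
  convert! (hI.add hE).mul_left w using 1
  · ext j
    push_cast
    ring
  · simp [branchSeries, excessSeries]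

lemma tsum_multiplicity_mul_term_eq [NeZero k] {σ : TreeClass}
    (hm : Summable fun τ : TreeClass => (τ.multiplicity σ : ℂ) * τ.term k z) :
    ∑' τ : TreeClass, (τ.multiplicity σ : ℂ) * τ.term k z = multiplicitySum k z σ 0 *
      (σ.term k z * (branchSeries k (σ.term k z) + excessSeries k (σ.term k z))) := by
  refine (hasSum_fiberwise_multiplicity hm σ).unique ?_
  convert! (hasSum_nat_mul_branchSeries_coeff (k := k) _).mul_left _ using 2 with j
  rw [mul_left_comm, ← multiplicitySum_eq, multiplicitySum, ← tsum_mul_left]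
  exact tsum_congr fun τ => by rw [τ.2]

lemma tsum_multiplicity_mul_term [NeZero k] {σ : TreeClass} (hz : Summable (term k z))
    (hm : Summable fun τ : TreeClass => (τ.multiplicity σ : ℂ) * τ.term k z)
    (hσ : ‖σ.term k z‖ ≤ 2 / 3) :
    ∑' τ : TreeClass, (τ.multiplicity σ : ℂ) * τ.term k z =
      (∑' τ, term k z τ) * (σ.term k z + excess k (σ.term k z)) := by
  have hI := branchSeries_ne_zero (k := k) hσ
  rw [tsum_multiplicity_mul_term_eq hm, tsum_term_eq_mul_branchSeries hz σ, excess]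
  field_simp

lemma summable_multiplicity_mul_size_mul_term (hz : Summable (term k z))
    (hsz : Summable fun τ : TreeClass => (τ.size : ℂ) * τ.term k z) :
    Summable (Function.uncurry fun τ σ : TreeClass =>
      (τ.multiplicity σ : ℂ) * σ.size * τ.term k z) := by
  have hnorm (τ : TreeClass) : HasSum (fun σ : TreeClass =>
      ‖(τ.multiplicity σ : ℂ) * σ.size * τ.term k z‖) ((τ.size - 1) * ‖τ.term k z‖) := by
    simpa using τ.hasSum_multiplicity_mul_size.mul_right ‖τ.term k z‖
  refine Summable.of_norm ((summable_prod_of_nonneg fun _ => norm_nonneg _).2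
    ⟨fun τ => (hnorm τ).summable, ?_⟩)
  refine (hsz.norm.sub hz.norm).congr fun τ => ?_
  simp only [Function.uncurry_apply_pair]
  rw [(hnorm τ).tsum_eq, norm_mul, Complex.norm_natCast, sub_one_mul]

/-- The factor by which the differential equation `z F' (1 - F) = F K` of the generating function
`F` deviates from the case `K = 1` of the tree function `F = z exp F`. -/
noncomputable def correction (k : ℕ) (z : ℂ) : ℂ :=
  1 + ∑' σ : TreeClass, (σ.size : ℂ) * excess k (σ.term k z)

-- Count the pairs of a tree and a non-root vertex of it, first by the tree and then by the class of
-- the branch containing the vertex.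
lemma tsum_size_mul_term_mul_one_sub [NeZero k] (hz : Summable (term k z))
    (hsz : Summable fun τ : TreeClass => (τ.size : ℂ) * τ.term k z)
    (hle : ∀ σ : TreeClass, ‖σ.term k z‖ ≤ 2 / 3)
    (hex : Summable fun σ : TreeClass => (σ.size : ℂ) * excess k (σ.term k z)) :
    (∑' τ : TreeClass, τ.size * τ.term k z) * (1 - ∑' τ, term k z τ) =
      (∑' τ, term k z τ) * correction k z := by
  have hm (σ : TreeClass) : Summable fun τ : TreeClass => (τ.multiplicity σ : ℂ) * τ.term k z :=
    Summable.of_norm_bounded hsz.norm fun τ => by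
      rw [norm_mul, norm_mul, Complex.norm_natCast, Complex.norm_natCast]
      gcongr
      exact τ.multiplicity_le_size σ
  have hrow : ∑' τ : TreeClass, ∑' σ, (τ.multiplicity σ : ℂ) * σ.size * τ.term k z =
      ∑' τ : TreeClass, τ.size * τ.term k z - ∑' τ, term k z τ := by
    rw [← hsz.tsum_sub hz]
    refine tsum_congr fun τ => ?_
    have hsize : HasSum (fun σ => (τ.multiplicity σ : ℂ) * σ.size) (τ.size - 1) := by
      simpa using Complex.hasSum_ofReal.2 τ.hasSum_multiplicity_mul_size
    rw [(hsize.mul_right _).tsum_eq, sub_one_mul]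
  have hcol : ∑' σ, ∑' τ : TreeClass, (τ.multiplicity σ : ℂ) * σ.size * τ.term k z =
      (∑' τ, term k z τ) * (∑' τ : TreeClass, τ.size * τ.term k z +
        ∑' σ : TreeClass, (σ.size : ℂ) * excess k (σ.term k z)) := by
    rw [← hsz.tsum_add hex, ← tsum_mul_left]
    refine tsum_congr fun σ => ?_
    calc ∑' τ : TreeClass, (τ.multiplicity σ : ℂ) * σ.size * τ.term k z
        = ∑' τ : TreeClass, σ.size * (τ.multiplicity σ * τ.term k z) :=
          tsum_congr fun τ => by ring
      _ = _ := by rw [tsum_mul_left, tsum_multiplicity_mul_term hz (hm σ) (hle σ)]; ring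
  have hcomm := (summable_multiplicity_mul_size_mul_term hz hsz).tsum_comm
  rw [hrow, hcol] at hcomm
  rw [correction]
  linear_combination -hcomm

end FunctionalEquation

section Asymptotics

open Filter Topology Metric

/-- The coefficient of `xⁿ` in the generating function `∑ τ, τ.term k x`. -/
noncomputable def weightSum (k n : ℕ) : ℝ :=
  ∑ τ ∈ sizeLE n with τ.size = n, (τ.autCard : ℝ)⁻¹ ^ k

lemma weightSum_nonneg (k n : ℕ) : 0 ≤ weightSum k n :=
  Finset.sum_nonneg fun _ _ => by positivity

lemma weightSum_one_pos (k : ℕ) : 0 < weightSum k 1 := by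
  refine Finset.sum_pos (fun τ _ => ?_) ⟨leaf, by simp⟩
  have := τ.autCard_pos
  positivity

lemma hasSum_weightSum_mul_pow {k : ℕ} {z : ℂ} (hz : Summable (term k z)) :
    HasSum (fun n => (weightSum k n : ℂ) * z ^ n) (∑' τ, term k z τ) := by
  convert! hz.hasSum.tsum_fiberwise size using 2 with n
  let s : Finset TreeClass := {τ ∈ sizeLE n | τ.size = n}
  have hs : size ⁻¹' {n} = (s : Set TreeClass) := by
    ext τ
    simpa [s] using fun h : τ.size = n => h.le
  rw [hs, Finset.tsum_subtype' s (term k z), weightSum]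
  push_cast
  rw [Finset.sum_mul]
  refine Finset.sum_congr rfl fun τ hτ => ?_
  rw [term, (Finset.mem_filter.1 hτ).2]

lemma mul_five_eighths_pow_le (n : ℕ) : (n : ℝ) * (5 / 8) ^ n ≤ 25 / 32 := by
  rcases n with _ | _ | n
  · norm_num
  · norm_num
  induction n with
  | zero => norm_num
  | succ n ih =>
    refine le_trans ?_ ih
    rw [pow_succ, mul_left_comm, mul_comm]
    have : (0 : ℝ) < (5 / 8) ^ (n + 1 + 1) := by positivity
    push_cast at *
    nlinarith [n.cast_nonneg (α := ℝ)]

lemma exists_forall_nat_mul_pow_le {r : ℝ} (hr₀ : 0 ≤ r) (hr₁ : r < 1) :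
    ∃ C, ∀ n : ℕ, n * r ^ n ≤ C :=
  (tendsto_self_mul_const_pow_of_lt_one hr₀ hr₁).bddAbove_range.imp fun _ hC n =>
    hC (Set.mem_range_self n)

variable {k : ℕ} {ρ : ℝ}

lemma norm_term_le {z : ℂ} (hz : ‖z‖ ≤ 1) (τ : TreeClass) : ‖τ.term k z‖ ≤ ‖z‖ := by
  rw [norm_term]
  exact (τ.term_le_pow k (norm_nonneg z)).trans (pow_le_of_le_one (norm_nonneg z) hz τ.size_pos.ne')

lemma term_sq_le (hρ : 0 ≤ ρ) (hρ₁ : ρ ≤ 5 / 8) {x : ℝ} (hx : 0 ≤ x) (hxρ : x ≤ 16 / 15 * ρ)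
    (τ : TreeClass) : τ.term k x ^ 2 ≤ τ.term k ρ * (32 / 45) ^ τ.size := by
  have hρτ := τ.term_nonneg k hρ
  calc τ.term k x ^ 2 ≤ τ.term k (16 / 15 * ρ) ^ 2 := by
        have := τ.term_nonneg k hx
        have := τ.term_le_term k hx hxρ
        gcongr
    _ = τ.term k ρ * (τ.term k ρ * ((16 / 15) ^ τ.size) ^ 2) := by
        rw [term_mul]
        ring
    _ ≤ τ.term k ρ * ((5 / 8) ^ τ.size * ((16 / 15) ^ τ.size) ^ 2) := by
        have := (τ.term_le_pow k hρ).trans (pow_le_pow_left₀ hρ hρ₁ _)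
        gcongr
    _ = τ.term k ρ * (32 / 45) ^ τ.size := by
        rw [← pow_mul', pow_mul, ← mul_pow]
        norm_num

lemma exists_forall_norm_size_mul_excess_le [NeZero k] (hρ : 0 ≤ ρ) (hρ₁ : ρ ≤ 5 / 8) :
    ∃ C, ∀ z : ℂ, ‖z‖ ≤ 16 / 15 * ρ → ∀ τ : TreeClass,
      ‖(τ.size : ℂ) * excess k (τ.term k z)‖ ≤ C * τ.term k ρ := by
  obtain ⟨C, hC⟩ := exists_forall_nat_mul_pow_le (r := 32 / 45) (by norm_num) (by norm_num)
  refine ⟨40 * C, fun z hz τ => ?_⟩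
  have hτ : ‖τ.term k z‖ ≤ 2 / 3 := (norm_term_le (by linarith) τ).trans (by linarith)
  have hρτ := τ.term_nonneg k hρ
  calc ‖(τ.size : ℂ) * excess k (τ.term k z)‖ ≤ τ.size * (40 * τ.term k ‖z‖ ^ 2) := by
        rw [norm_mul, Complex.norm_natCast, ← norm_term]
        gcongr
        exact norm_excess_le hτ
    _ ≤ τ.size * (40 * (τ.term k ρ * (32 / 45) ^ τ.size)) := by
        gcongr
        exact term_sq_le hρ hρ₁ (norm_nonneg z) hz τ
    _ = 40 * (τ.size * (32 / 45) ^ τ.size) * τ.term k ρ := by ring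
    _ ≤ 40 * C * τ.term k ρ := by
        gcongr
        exact hC _

section CriticalPoint

variable (hρ : 0 < ρ) (hρ₁ : ρ ≤ 5 / 8) (hsum : HasSum (term k ρ) 1)

include hρ hρ₁ hsum

lemma summable_size_mul_excess [NeZero k] {z : ℂ} (hz : ‖z‖ ≤ 16 / 15 * ρ) :
    Summable fun τ : TreeClass => (τ.size : ℂ) * excess k (τ.term k z) := by
  obtain ⟨C, hC⟩ := exists_forall_norm_size_mul_excess_le (k := k) hρ.le hρ₁
  exact Summable.of_norm_bounded (hsum.summable.mul_left C) (hC z hz)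

lemma differentiableOn_correction [NeZero k] :
    DifferentiableOn ℂ (correction k) (ball 0 (16 / 15 * ρ)) := by
  obtain ⟨C, hC⟩ := exists_forall_norm_size_mul_excess_le (k := k) hρ.le hρ₁
  refine DifferentiableOn.const_add _ <| Complex.differentiableOn_tsum_of_summable_norm
    (hsum.summable.mul_left C) (fun τ z hz => ?_) isOpen_ball
    fun τ z hz => hC z (mem_ball_zero_iff.1 hz).le τ
  rw [mem_ball_zero_iff] at hz
  have hterm : DifferentiableAt ℂ (fun z : ℂ => τ.term k z) z := by unfold term; fun_prop
  have hτ : ‖τ.term k z‖ ≤ 2 / 3 := (norm_term_le (by linarith) τ).trans (by linarith)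
  exact (((differentiableAt_excess hτ).comp z hterm).const_mul _).differentiableWithinAt

lemma exists_correction_eq_ofReal [NeZero k] : ∃ κ : ℝ, 0 < κ ∧ correction k ρ = κ := by
  choose r hr hle using fun τ : TreeClass =>
    exists_excess_ofReal_eq (k := k) (τ.term_nonneg k hρ.le)
  have hsize : Summable fun τ : TreeClass => (τ.size : ℝ) * r τ := by
    have hex := summable_size_mul_excess (z := ρ) hρ hρ₁ hsum
      (by rw [Complex.norm_of_nonneg hρ.le]; linarith)
    simp only [← ofReal_term, hr] at hex
    exact_mod_cast hex
  refine ⟨1 + ∑' τ : TreeClass, (τ.size : ℝ) * r τ, ?_, by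
    simp only [correction, ← ofReal_term, hr]
    push_cast
    rfl⟩
  have hbound (τ : TreeClass) : -(25 / 32 * τ.term k ρ) ≤ τ.size * r τ := by
    have hτ := τ.term_nonneg k hρ.le
    have hsmall : τ.size * τ.term k ρ ≤ 25 / 32 :=
      (mul_le_mul_of_nonneg_left ((τ.term_le_pow k hρ.le).trans (pow_le_pow_left₀ hρ.le hρ₁ _))
        (Nat.cast_nonneg _)).trans (mul_five_eighths_pow_le _)
    nlinarith [mul_le_mul_of_nonneg_left (hle τ) τ.size.cast_nonneg]
  have hge := hasSum_le hbound (hsum.mul_left (25 / 32)).neg hsize.hasSum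
  linarith

omit hρ₁

omit hsum in
lemma norm_term_mul_le {w : ℂ} (hw : ‖w‖ ≤ 1) (τ : TreeClass) :
    ‖τ.term k (w * ρ)‖ ≤ τ.term k ρ := by
  rw [norm_term, norm_mul, Complex.norm_of_nonneg hρ.le]
  exact τ.term_le_term k (by positivity) (mul_le_of_le_one_left hρ.le hw)

lemma summable_term_mul {w : ℂ} (hw : ‖w‖ ≤ 1) : Summable (term k (w * ρ)) :=
  Summable.of_norm_bounded hsum.summable (norm_term_mul_le hρ hw)

lemma genFun_weightSum {w : ℂ} (hw : ‖w‖ ≤ 1) :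
    genFun (fun n => weightSum k n * ρ ^ n) w = ∑' τ, term k (w * ρ) τ := by
  rw [← (hasSum_weightSum_mul_pow (summable_term_mul hρ hsum hw)).tsum_eq, genFun]
  refine tsum_congr fun n => ?_
  push_cast
  ring

lemma hasSum_weightSum : HasSum (fun n => weightSum k n * ρ ^ n) 1 := by
  have htsum : ∑' τ, term k (ρ : ℂ) τ = (1 : ℝ) := by
    simp only [← ofReal_term]
    rw [← Complex.ofReal_tsum, hsum.tsum_eq]
  have hsummable : Summable (term k (ρ : ℂ)) := by
    simpa using summable_term_mul hρ hsum (w := 1) (by simp)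
  have := hasSum_weightSum_mul_pow hsummable
  rw [htsum] at this
  exact_mod_cast this

lemma hasSum_size_mul_term {w : ℂ} (hw : ‖w‖ < 1) :
    HasSum (fun τ : TreeClass => (τ.size : ℂ) * τ.term k (w * ρ))
      (w * deriv (genFun fun n => weightSum k n * ρ ^ n) w) := by
  have heq : (genFun fun n => weightSum k n * ρ ^ n) =ᶠ[𝓝 w]
      fun w => ∑' τ, term k (w * ρ) τ := by
    filter_upwards [isOpen_ball.mem_nhds (mem_ball_zero_iff.2 hw)] with v hv
    exact genFun_weightSum hρ hsum (mem_ball_zero_iff.1 hv).le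
  have hderiv := Complex.hasSum_deriv_of_summable_norm (F := fun τ w => term k (w * ρ) τ)
    hsum.summable (fun τ => by simp only [term_mul]; fun_prop) isOpen_ball
    (fun τ v hv => norm_term_mul_le hρ (mem_ball_zero_iff.1 hv).le τ) (mem_ball_zero_iff.2 hw)
  rw [heq.deriv_eq]
  convert! hderiv.mul_left w using 2 with τ
  simp only [term_mul, deriv_const_mul_field', deriv_pow_field]
  rw [← mul_pow_sub_one τ.size_pos.ne' w]
  ring

end CriticalPoint

theorem exists_tendsto_rpow_mul_weightSum (k : ℕ) [NeZero k] : ∃ A ρ : ℝ, 0 < A ∧ 0 < ρ ∧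
    Tendsto (fun n : ℕ => (n : ℝ) ^ (3 / 2 : ℝ) * (weightSum k n * ρ ^ n)) atTop (𝓝 A) := by
  obtain ⟨ρ, hρ, hρ₁, hsum⟩ := exists_hasSum_term_eq_one k
  obtain ⟨κ, hκ, hcorr⟩ := exists_correction_eq_ofReal hρ hρ₁ hsum
  have hweight := hasSum_weightSum hρ hsum
  have hdiff : DifferentiableOn ℂ (fun w => correction k (w * ρ)) (ball 0 (16 / 15)) :=
    (differentiableOn_correction hρ hρ₁ hsum).comp (by fun_prop) fun w hw => by
      rw [mem_ball_zero_iff] at hw ⊢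
      rw [norm_mul, Complex.norm_of_nonneg hρ.le]
      gcongr
  have hode (w : ℂ) (hw : ‖w‖ < 1) :
      w * deriv (genFun fun n => weightSum k n * ρ ^ n) w *
        (1 - genFun (fun n => weightSum k n * ρ ^ n) w) =
      genFun (fun n => weightSum k n * ρ ^ n) w * correction k (w * ρ) := by
    have hnorm : ‖w * ρ‖ ≤ ρ := by
      rw [norm_mul, Complex.norm_of_nonneg hρ.le]
      exact mul_le_of_le_one_left hρ.le hw.le
    have heuler := hasSum_size_mul_term hρ hsum hw
    rw [genFun_weightSum hρ hsum hw.le, ← heuler.tsum_eq]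
    exact tsum_size_mul_term_mul_one_sub (summable_term_mul hρ hsum hw.le) heuler.summable
      (fun σ => (norm_term_le (by linarith) σ).trans (by linarith))
      (summable_size_mul_excess hρ hρ₁ hsum (by linarith))
  exact ⟨_, ρ, by positivity, hρ, tendsto_rpow_three_halves_mul_coeff
    (fun n => mul_nonneg (weightSum_nonneg k n) (by positivity)) hweight.summable hweight.tsum_eq
    (mul_pos (weightSum_one_pos k) (by positivity)) (by norm_num) hdiff hκ (by simpa using hcorr)
    hode⟩

end Asymptotics

end TreeClass

namespace ParentTree

section Graph

variable {V W : Type*} {P Q : ParentTree V}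

variable (P) in
/-- The underlying tree as a graph: every vertex other than the root is joined to its parent. -/
def graph : SimpleGraph V := SimpleGraph.fromRel fun u v => P.parent u = v

lemma graph_adj {u v : V} : P.graph.Adj u v ↔ u ≠ v ∧ (P.parent u = v ∨ P.parent v = u) :=
  SimpleGraph.fromRel_adj _ u v

lemma graph_adj_parent {v : V} (hv : v ≠ P.root) : P.graph.Adj v (P.parent v) :=
  graph_adj.2 ⟨fun h => hv (eq_root_of_parent_eq_self h.symm), .inl rfl⟩

variable (P) in
lemma graph_connected : P.graph.Connected := by
  have hroot (v : V) : P.graph.Reachable v P.root := by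
    induction P.exists_iterate_eq_root v using IsAncestor.induction with
    | self => rfl
    | step v hv _ ih => exact (graph_adj_parent hv).reachable.trans ih
  exact (SimpleGraph.connected_iff _).2 ⟨fun u v => (hroot u).trans (hroot v).symm, ⟨P.root⟩⟩

variable (P) in
lemma graph_isTree [Finite V] : P.graph.IsTree := by
  rw [SimpleGraph.isTree_iff_connected_and_card]
  refine ⟨P.graph_connected, le_antisymm ?_ P.graph_connected.card_vert_le_card_edgeSet_add_one⟩
  rw [← Nat.card_congr (Equiv.optionSubtypeNe P.root), Finite.card_option]
  gcongr
  let edge (v : {v // v ≠ P.root}) : P.graph.edgeSet := ⟨s(v, P.parent v), graph_adj_parent v.2⟩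
  refine Nat.card_le_card_of_surjective edge ?_
  rintro ⟨⟨u, v⟩, he⟩
  have hadj : P.graph.Adj u v := he
  obtain ⟨hne, rfl | rfl⟩ := graph_adj.1 hadj
  · exact ⟨⟨u, fun h => hne (by rw [h, P.parent_root])⟩, rfl⟩
  · exact ⟨⟨v, fun h => hne (by rw [h, P.parent_root])⟩, Subtype.ext Sym2.eq_swap⟩

lemma eq_root_of_parent_parent_eq_self {v : V} (h : P.parent (P.parent v) = v) : v = P.root := by
  obtain ⟨k, hk⟩ := P.exists_iterate_eq_root v
  calc v = (P.parent^[2])^[k] v := (Function.iterate_fixed h k).symm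
    _ = P.parent^[k] (P.parent^[k] v) := by
      rw [← Function.iterate_mul, two_mul, Function.iterate_add_apply]
    _ = P.root := by rw [hk, Function.iterate_fixed P.parent_root]

lemma eq_of_root_eq_of_graph_le (hroot : P.root = Q.root) (hgraph : P.graph ≤ Q.graph) :
    P = Q := by
  refine ParentTree.ext (funext fun v => ?_) hroot
  induction P.exists_iterate_eq_root v using IsAncestor.induction with
  | self => rw [P.parent_root, hroot, Q.parent_root]
  | step v hv _ ih =>
    rcases (graph_adj.1 (hgraph (graph_adj_parent hv))).2 with h | h
    · exact h.symm
    · exact absurd (eq_root_of_parent_parent_eq_self (ih.trans h)) hv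

lemma comap_graph (Q : ParentTree W) (e : V ≃ W) : (Q.comap e).graph = Q.graph.comap e := by
  ext u v
  simp [graph_adj, comap, Equiv.symm_apply_eq]

lemma nonempty_iso_iff {Q : ParentTree W} :
    Nonempty (P.Iso Q) ↔ ∃ φ : P.graph ≃g Q.graph, φ P.root = Q.root := by
  constructor
  · rintro ⟨e⟩
    refine ⟨⟨e.toEquiv, fun {u v} => ?_⟩, e.map_root⟩
    simp [graph_adj, ← e.map_parent]
  · rintro ⟨φ, hφ⟩
    have heq : P = Q.comap φ.toEquiv := by
      refine eq_of_root_eq_of_graph_le (φ.eq_symm_apply.2 hφ) fun u v h => ?_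
      rw [comap_graph]
      exact φ.map_rel_iff.2 h
    exact ⟨heq ▸ Q.comapIso φ.toEquiv⟩

lemma exists_adj_dist_lt {G : SimpleGraph V} (hG : G.Connected) {r v : V} (hv : v ≠ r) :
    ∃ w, G.Adj v w ∧ G.dist w r < G.dist v r := by
  obtain ⟨p, hp⟩ := hG.exists_walk_length_eq_dist v r
  cases p with
  | nil => exact absurd rfl hv
  | cons hadj q =>
    refine ⟨_, hadj, ?_⟩
    rw [← hp, SimpleGraph.Walk.length_cons]
    exact Nat.lt_succ_of_le (SimpleGraph.dist_le q)

lemma exists_root_eq_and_graph_le {G : SimpleGraph V} (hG : G.Connected) (r : V) :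
    ∃ P : ParentTree V, P.root = r ∧ P.graph ≤ G := by
  choose! next hadj hdist using fun v (hv : v ≠ r) => exists_adj_dist_lt hG hv
  let parent : V → V := Function.update next r r
  have parent_of_ne {v : V} (hv : v ≠ r) : parent v = next v := Function.update_of_ne hv _ _
  have parent_root : parent r = r := Function.update_self _ _ _
  have exists_iterate (v : V) : ∃ k, parent^[k] v = r := by
    induction hd : G.dist v r using Nat.strong_induction_on generalizing v with
    | _ d ih =>
      by_cases hv : v = r
      · exact ⟨0, hv⟩
      · obtain ⟨k, hk⟩ := ih _ (hd ▸ hdist v hv) (next v) rfl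
        exact ⟨k + 1, by rwa [Function.iterate_succ_apply, parent_of_ne hv]⟩
  have adj_of_parent_eq {u v : V} (hne : u ≠ v) (h : parent u = v) : G.Adj u v := by
    have hu : u ≠ r := by rintro rfl; exact hne (parent_root.symm.trans h)
    rw [← h, parent_of_ne hu]
    exact hadj u hu
  refine ⟨⟨parent, r, parent_root, exists_iterate⟩, rfl, fun u v h => ?_⟩
  obtain ⟨hne, h | h⟩ := graph_adj.1 h
  · exact adj_of_parent_eq hne h
  · exact (adj_of_parent_eq hne.symm h).symm

/-- The rooted labeled tree with a given parent map. -/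
def toRTree {n : ℕ} (P : ParentTree (Fin n)) : RTree n := ⟨P.graph, P.graph_isTree, P.root⟩

lemma toRTree_bijective {n : ℕ} : Function.Bijective (toRTree (n := n)) := by
  refine ⟨fun P Q h => ?_, fun ⟨G, hG, r⟩ => ?_⟩
  · exact eq_of_root_eq_of_graph_le (congrArg RTree.root h) (congrArg RTree.graph h).le
  · obtain ⟨P, rfl, hle⟩ := exists_root_eq_and_graph_le hG.connected r
    have hmin := SimpleGraph.isTree_iff_minimal_connected.1 hG
    obtain rfl : P.graph = G := le_antisymm hle (hmin.2 P.graph_connected hle)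
    exact ⟨P, rfl⟩

end Graph

end ParentTree

section Counting

open TreeClass

lemma card_eq_sum_card_fiber {α β : Type*} [Finite α] {f : α → β} {t : Finset β}
    (ht : ∀ a, f a ∈ t) : Nat.card α = ∑ b ∈ t, Nat.card {a // f a = b} := by
  have := Fintype.ofFinite α
  simp only [Nat.card_eq_fintype_card, Fintype.card_subtype]
  exact Finset.card_eq_sum_card_fiberwise fun a _ => ht a

lemma card_pairs_eq_sum_card_fiber_sq {α β : Type*} [Finite α] {f : α → β} {t : Finset β}
    (ht : ∀ a, f a ∈ t) :
    Nat.card {p : α × α // f p.1 = f p.2} = ∑ b ∈ t, Nat.card {a // f a = b} ^ 2 := by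
  rw [card_eq_sum_card_fiber (f := fun p : {p : α × α // f p.1 = f p.2} => f p.1.1)
    fun p => ht p.1.1]
  refine Finset.sum_congr rfl fun b _ => ?_
  rw [sq, ← Nat.card_prod]
  exact Nat.card_congr
    ⟨fun p => (⟨p.1.1.1, p.2⟩, ⟨p.1.1.2, p.1.2.symm.trans p.2⟩),
      fun q => ⟨⟨(q.1.1, q.2.1), q.1.2.trans q.2.2.symm⟩, q.1.2⟩, fun _ => rfl, fun _ => rfl⟩

lemma card_mk_eq {n : ℕ} {τ : TreeClass} (h : τ.size = n) :
    (Nat.card {P : ParentTree (Fin n) // mk P = τ} : ℝ) = n.factorial * (τ.autCard : ℝ)⁻¹ := by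
  obtain ⟨Q, rfl⟩ := exists_mk_eq h
  have hcard := ParentTree.card_labelings_mul_card_iso (.refl (Fin n)) Q
  simp only [mk_eq_mk_iff, Nat.card_fin, ← autCard_mk Q] at hcard ⊢
  rw [eq_mul_inv_iff_mul_eq₀ (mod_cast (autCard_pos _).ne')]
  exact_mod_cast hcard

lemma mk_mem_sizeLE_filter {n : ℕ} (P : ParentTree (Fin n)) :
    mk P ∈ {τ ∈ sizeLE n | τ.size = n} := by
  simp

lemma card_rTree (n : ℕ) : (Nat.card (RTree n) : ℝ) = n.factorial * weightSum 1 n := by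
  rw [← Nat.card_congr (.ofBijective _ ParentTree.toRTree_bijective),
    card_eq_sum_card_fiber mk_mem_sizeLE_filter, weightSum, Finset.mul_sum]
  push_cast
  refine Finset.sum_congr rfl fun τ hτ => ?_
  rw [card_mk_eq (Finset.mem_filter.1 hτ).2, pow_one]

lemma card_isom_pairs (n : ℕ) : (Nat.card {p : RTree n × RTree n // p.1.Isom p.2} : ℝ) =
    n.factorial ^ 2 * weightSum 2 n := by
  let e : ParentTree (Fin n) ≃ RTree n := .ofBijective _ ParentTree.toRTree_bijective
  have hiso (p : ParentTree (Fin n) × ParentTree (Fin n)) :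
      mk p.1 = mk p.2 ↔ (e p.1).Isom (e p.2) :=
    mk_eq_mk_iff.trans ParentTree.nonempty_iso_iff
  rw [← Nat.card_congr ((e.prodCongr e).subtypeEquiv hiso),
    card_pairs_eq_sum_card_fiber_sq mk_mem_sizeLE_filter, weightSum, Finset.mul_sum]
  push_cast
  refine Finset.sum_congr rfl fun τ hτ => ?_
  rw [card_mk_eq (Finset.mem_filter.1 hτ).2, mul_pow]

lemma probIsom_eq (n : ℕ) : probIsom n = weightSum 2 n / weightSum 1 n ^ 2 := by
  rw [probIsom, card_rTree, card_isom_pairs, mul_pow, mul_div_mul_left _ _ (by positivity)]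

lemma probIsom_le_one (n : ℕ) : probIsom n ≤ 1 := by
  refine div_le_one_of_le₀ ?_ (by positivity)
  rw [sq]
  exact_mod_cast (Nat.card_le_card_of_injective _ Subtype.val_injective).trans_eq
    (Nat.card_prod (RTree n) (RTree n))

end Counting

section Conclusion

open Filter Topology

lemma lt_one_of_tendsto_div_rpow_mul_pow {u : ℕ → ℝ} {a c A : ℝ} (hu : ∀ n, u n ≤ 1) (ha : 0 < a)
    (hA : 0 < A) (h : Tendsto (fun n : ℕ => u n / ((n : ℝ) ^ a * c ^ n)) atTop (𝓝 A)) : c < 1 := by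
  by_contra! hc
  have hzero : Tendsto (fun n : ℕ => (n : ℝ) ^ (-a)) atTop (𝓝 0) :=
    (tendsto_rpow_neg_atTop ha).comp tendsto_natCast_atTop_atTop
  refine hA.not_ge (le_of_tendsto_of_tendsto h hzero ?_)
  filter_upwards [eventually_gt_atTop 0] with n hn
  have hpos : 0 < (n : ℝ) ^ a := by positivity
  rw [Real.rpow_neg n.cast_nonneg, ← one_div]
  exact div_le_div₀ zero_le_one (hu n) hpos (le_mul_of_one_le_right hpos.le (one_le_pow₀ hc))

end Conclusion

/-- The probability `p_n` that two uniformly random rooted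
labeled trees on `n` vertices are isomorphic satisfies
`p_n / (n^(3/2) c^n) → A` for some constants `A > 0` and `c ∈ (0,1)`. -/
theorem prob_isom_labeled_asymptotics :
    ∃ A c : ℝ, 0 < A ∧ 0 < c ∧ c < 1 ∧
      Filter.Tendsto
        (fun n : ℕ => probIsom n / ((n : ℝ) ^ (3 / 2 : ℝ) * c ^ n))
        Filter.atTop (nhds A) := by
  obtain ⟨A₁, ρ₁, hA₁, hρ₁, hlim₁⟩ := TreeClass.exists_tendsto_rpow_mul_weightSum 1
  obtain ⟨A₂, ρ₂, hA₂, hρ₂, hlim₂⟩ := TreeClass.exists_tendsto_rpow_mul_weightSum 2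
  have hlim : Filter.Tendsto
      (fun n : ℕ => probIsom n / ((n : ℝ) ^ (3 / 2 : ℝ) * (ρ₁ ^ 2 / ρ₂) ^ n))
      Filter.atTop (nhds (A₂ / A₁ ^ 2)) := by
    refine (hlim₂.div (hlim₁.pow 2) (by positivity)).congr' ?_
    filter_upwards [Filter.eventually_gt_atTop 0] with n hn
    have hpow : (n : ℝ) ^ (3 / 2 : ℝ) ≠ 0 := by positivity
    rw [Pi.div_apply, probIsom_eq, div_pow, pow_right_comm ρ₁]
    field_simp
  have hA : 0 < A₂ / A₁ ^ 2 := by positivity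
  exact ⟨_, _, hA, by positivity,
    lt_one_of_tendsto_div_rpow_mul_pow probIsom_le_one (by norm_num) hA hlim, hlim⟩
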